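/- arXiv:2311.15184 — 10 statements merged into one kernel-verified Lean document; each statement's English description precedes it below -/
import Mathlib

section
/- For every integer k ≥ 1, every real λ > 0, and every integer n ≥ 0, the series defining the n-th factorial moment of the Poisson distribution of order k converges and equals the explicit combinatorial sum: M_{(n)}(k,λ) = n! · Σ_{n₁+2n₂+⋯+k·n_k = n} ∏_{j=1}^k (λ^{n_j}/n_j!) · C(k+1, j+1)^{n_j}, where the (finite) sum ranges over all k-tuples (n₁,…,n_k) of nonnegative integers with n₁+2n₂+⋯+k·n_k = n. -/
/-!
The generating function `∑ P_m s ^ m` is `exp (-kλ) * exp (λ (s + s² + ⋯ + s ^ k))`, because a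
product of exponential series expands over tuples `(n₁, …, n_k)`, which are then grouped by weight.
Its Taylor coefficients at `s = 1` are the binomial moments `∑ C(m, n) P_m`. On the other hand,
`s = 1 + t` turns `λ (s + s² + ⋯ + s ^ k)` into `kλ + λ ∑ C(k + 1, j + 1) t ^ j`, where `kλ` cancels
the prefactor and the exponential of the rest expands over tuples in the same way; comparing
coefficients of `t ^ n` gives the `n`-th factorial moment divided by `n!`.
-/

open scoped BigOperators

/-- The finite set of `k`-tuples `(n₁, …, n_k)` of nonnegative integers
(encoded as functions `Fin k → Fin (m+1)`) satisfying `n₁ + 2 n₂ + ⋯ + k n_k = m`. -/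
def orderkTuples (k m : ℕ) : Finset (Fin k → Fin (m + 1)) :=
  Finset.univ.filter (fun f => ∑ j : Fin k, (j.1 + 1) * (f j).1 = m)

/-- The probability mass function of the Poisson distribution of order `k`:
`P_m(k,λ) = e^{-kλ} ∑_{n₁+2n₂+⋯+k n_k = m} ∏_{j=1}^k λ^{n_j}/n_j!`. -/
noncomputable def poissonOrderK (k : ℕ) (lam : ℝ) (m : ℕ) : ℝ :=
  Real.exp (-(k * lam)) *
    ∑ f ∈ orderkTuples k m, ∏ j : Fin k, lam ^ (f j).1 / (f j).1.factorial

lemma hasSum_prod_and_summable_norm_prod {ι : Type*} {κ : ι → Type*} {R : Type*} [hι : Fintype ι]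
    [NormedCommRing R] [CompleteSpace R] {f : ∀ i, κ i → R} {a : ι → R}
    (hf : ∀ i, HasSum (f i) (a i)) (hnorm : ∀ i, Summable fun x ↦ ‖f i x‖) :
    HasSum (fun x : ∀ i, κ i ↦ ∏ i, f i (x i)) (∏ i, a i) ∧
      Summable fun x : ∀ i, κ i ↦ ‖∏ i, f i (x i)‖ := by
  revert κ f a
  refine @(Fintype.induction_empty_option ?_ ?_ ?_ ι (h_fintype := hι))
  · intro α β _ e ih κ f a hf hnorm
    let _ := Fintype.ofEquiv β e.symm
    rw [← (e.piCongrLeft κ).hasSum_iff, ← (e.piCongrLeft κ).summable_iff]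
    simpa only [Function.comp_def, ← e.prod_comp, Equiv.piCongrLeft_apply_apply] using
      ih (fun i ↦ hf (e i)) fun i ↦ hnorm (e i)
  · intro κ f a _ _
    simp [Summable.of_finite]
  · intro α _ ih κ f a hf hnorm
    obtain ⟨hsum, hsummable⟩ := ih (fun i ↦ hf (some i)) fun i ↦ hnorm (some i)
    let e : (κ none × ∀ i, κ (some i)) ≃ ∀ i, κ i := Equiv.piOptionEquivProd.symm
    have hsplit (x : κ none × ∀ i, κ (some i)) :
        ∏ i, f i (e x i) = f none x.1 * ∏ i, f (some i) (x.2 i) := Fintype.prod_option _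
    rw [← e.hasSum_iff, ← e.summable_iff, Fintype.prod_option]
    simp only [Function.comp_def, hsplit]
    have hmul_norm := (hnorm none).mul_norm hsummable
    have hmul := (hf none).mul hsum hmul_norm.of_norm
    exact ⟨hmul, hmul_norm⟩

lemma hasSum_prod_pow_div_factorial {ι 𝕜 : Type*} [Fintype ι] [NormedField 𝕜] [NormedAlgebra ℚ 𝕜]
    [CompleteSpace 𝕜] (x : ι → 𝕜) :
    HasSum (fun f : ι → ℕ ↦ ∏ i, x i ^ f i / (f i).factorial) (NormedSpace.exp (∑ i, x i)) := by
  rw [NormedSpace.exp_sum]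
  exact (hasSum_prod_and_summable_norm_prod
    (fun i ↦ NormedSpace.expSeries_div_hasSum_exp (x i))
    fun i ↦ NormedSpace.norm_expSeries_div_summable (x i)).1

lemma eq_of_hasSum_mul_pow {𝕜 : Type*} [NontriviallyNormedField 𝕜] {a b : ℕ → 𝕜} {G : 𝕜 → 𝕜}
    (ha : ∀ t, HasSum (fun n ↦ a n * t ^ n) (G t))
    (hb : ∀ t, HasSum (fun n ↦ b n * t ^ n) (G t)) : a = b := by
  have hasFPowerSeries {c : ℕ → 𝕜} (hc : ∀ t, HasSum (fun n ↦ c n * t ^ n) (G t)) :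
      HasFPowerSeriesAt G (FormalMultilinearSeries.ofScalars 𝕜 c) 0 :=
    hasFPowerSeriesAt_iff.2 <| .of_forall fun t ↦ by
      simpa [FormalMultilinearSeries.coeff_ofScalars, mul_comm] using hc t
  exact FormalMultilinearSeries.ofScalars_series_injective 𝕜 𝕜
    ((hasFPowerSeries ha).eq_formalMultilinearSeries (hasFPowerSeries hb))

lemma hasSum_add_pow {R : Type*} [CommSemiring R] [TopologicalSpace R] (x t : R) (m : ℕ) :
    HasSum (fun n ↦ m.choose n * x ^ (m - n) * t ^ n) ((x + t) ^ m) := by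
  have hpow : (x + t) ^ m =
      ∑ n ∈ Finset.range (m + 1), m.choose n * x ^ (m - n) * t ^ n := by
    rw [add_comm, add_pow]
    exact Finset.sum_congr rfl fun n _ ↦ by ring
  rw [hpow]
  refine hasSum_sum_of_ne_finset_zero fun n hn ↦ ?_
  simp [Nat.choose_eq_zero_of_lt (by simpa using hn : m < n)]

section TaylorShift

variable {𝕜 : Type*} [RCLike 𝕜] {a b : ℕ → 𝕜} {G : 𝕜 → 𝕜}

lemma summable_mul_choose_mul_pow (ha : ∀ s, Summable fun m ↦ a m * s ^ m) (x t : 𝕜) :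
    Summable fun p : ℕ × ℕ ↦ a p.1 * (p.1.choose p.2 * x ^ (p.1 - p.2) * t ^ p.2) := by
  have hnorm (m n : ℕ) : ‖a m * (m.choose n * x ^ (m - n) * t ^ n)‖ =
      ‖a m‖ * (m.choose n * ‖x‖ ^ (m - n) * ‖t‖ ^ n) := by
    simp only [norm_mul, norm_pow, RCLike.norm_natCast]
  have hrow (m : ℕ) := (hasSum_add_pow ‖x‖ ‖t‖ m).mul_left ‖a m‖
  have hrows : Summable fun m ↦ ‖a m‖ * (‖x‖ + ‖t‖) ^ m := by
    refine (ha (‖x‖ + ‖t‖ : ℝ)).norm.congr fun m ↦ ?_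
    rw [norm_mul, norm_pow, RCLike.norm_of_nonneg (by positivity)]
  rw [← summable_norm_iff, summable_prod_of_nonneg fun _ ↦ norm_nonneg _]
  simp only [hnorm, (hrow _).tsum_eq]
  exact ⟨fun m ↦ (hrow m).summable, hrows⟩

lemma hasSum_mul_choose_of_hasSum_add (x : 𝕜)
    (ha : ∀ s, HasSum (fun m ↦ a m * s ^ m) (G s))
    (hb : ∀ t, HasSum (fun n ↦ b n * t ^ n) (G (x + t))) (n : ℕ) :
    HasSum (fun m ↦ a m * (m.choose n * x ^ (m - n))) (b n) := by
  have hdouble (t : 𝕜) := summable_mul_choose_mul_pow (fun s ↦ (ha s).summable) x t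
  have hcol (n : ℕ) : Summable fun m ↦ a m * (m.choose n * x ^ (m - n)) := by
    simpa using (hdouble 1).prod_symm.prod_factor n
  have hshift (t : 𝕜) :
      HasSum (fun n ↦ (∑' m, a m * (m.choose n * x ^ (m - n))) * t ^ n) (G (x + t)) := by
    have hrows := (hdouble t).hasSum.prod_fiberwise fun m ↦ (hasSum_add_pow x t m).mul_left (a m)
    have htotal := (hdouble t).hasSum
    rw [hrows.unique (ha (x + t)), ← (Equiv.prodComm ℕ ℕ).hasSum_iff] at htotal
    refine htotal.prod_fiberwise fun n ↦ ?_
    simpa [mul_assoc] using (hcol n).hasSum.mul_right (t ^ n)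
  rw [← eq_of_hasSum_mul_pow hshift hb]
  exact (hcol n).hasSum

end TaylorShift

lemma sum_range_one_add_pow_succ {R : Type*} [CommRing R] (k : ℕ) (t : R) :
    ∑ j ∈ Finset.range k, (1 + t) ^ (j + 1) =
      k + ∑ j ∈ Finset.range k, ((k + 1).choose (j + 2) : R) * t ^ (j + 1) := by
  have hgeom := congrArg (Polynomial.eval t) (Polynomial.geom_sum_X_comp_X_add_one_eq_sum (k + 1))
  simp only [Polynomial.eval_comp, Polynomial.eval_finsetSum, Polynomial.eval_pow,
    Polynomial.eval_X, Polynomial.eval_add, Polynomial.eval_one, Polynomial.eval_mul,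
    Polynomial.eval_natCast, Finset.sum_range_succ' _ k, add_comm t 1, zero_add,
    Nat.choose_one_right] at hgeom
  push_cast at hgeom
  linear_combination hgeom

section TupleSums

variable {𝕜 : Type*} {k : ℕ}

/-- The coefficient of `s ^ m` in `exp (c₁ s + c₂ s² + ⋯ + c_k s ^ k)`, with `c_{j+1}` encoded as
`c j`. It describes both the mass function of the Poisson distribution of order `k` (all `c j` equal
to `λ`) and its factorial moments (`c j = λ * C(k + 1, j + 2)`). -/
def expCoeff [Field 𝕜] (c : Fin k → 𝕜) (m : ℕ) : 𝕜 :=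
  ∑ f ∈ orderkTuples k m, ∏ j, c j ^ (f j).1 / (f j).1.factorial

/-- `orderkTuples k m` as a fibre of the weight map on unbounded tuples: the bound `f j < m + 1`
built into its encoding follows from the weight being `m`. -/
def orderkTuplesEquiv (k m : ℕ) :
    orderkTuples k m ≃ {f : Fin k → ℕ // ∑ j, (j.1 + 1) * f j = m} where
  toFun f := ⟨fun j ↦ f.1 j, by simpa [orderkTuples] using f.2⟩
  invFun f := ⟨fun j ↦ ⟨f.1 j, Nat.lt_succ_of_le <| calc
      f.1 j ≤ (j.1 + 1) * f.1 j := Nat.le_mul_of_pos_left _ j.1.succ_pos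
      _ ≤ ∑ i : Fin k, (i.1 + 1) * f.1 i :=
        Finset.single_le_sum (f := fun i : Fin k ↦ (i.1 + 1) * f.1 i) (by simp) (Finset.mem_univ j)
      _ = m := f.2⟩, by simpa [orderkTuples] using f.2⟩

lemma hasSum_expCoeff_mul_pow [NormedField 𝕜] [NormedAlgebra ℚ 𝕜] [CompleteSpace 𝕜]
    (c : Fin k → 𝕜) (s : 𝕜) :
    HasSum (fun m ↦ expCoeff c m * s ^ m) (NormedSpace.exp (∑ j, c j * s ^ (j.1 + 1))) := by
  have hprod := hasSum_prod_pow_div_factorial fun j : Fin k ↦ c j * s ^ (j.1 + 1)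
  have hweight (f : Fin k → ℕ) : ∏ j, (c j * s ^ (j.1 + 1)) ^ f j / (f j).factorial =
      (∏ j, c j ^ f j / (f j).factorial) * s ^ ∑ j, (j.1 + 1) * f j := by
    rw [← Finset.prod_pow_eq_pow_sum, ← Finset.prod_mul_distrib]
    exact Finset.prod_congr rfl fun j _ ↦ by rw [mul_pow, pow_mul, mul_div_right_comm]
  simp only [hweight] at hprod
  rw [← (Equiv.sigmaFiberEquiv fun f : Fin k → ℕ ↦ ∑ j, (j.1 + 1) * f j).hasSum_iff] at hprod
  refine hprod.sigma fun m ↦ ?_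
  rw [expCoeff, Finset.sum_mul, ← Finset.sum_coe_sort, ← (orderkTuplesEquiv k m).hasSum_iff]
  convert! hasSum_fintype _ using 2 with f
  exact congrArg (_ * s ^ ·) (orderkTuplesEquiv k m f).2.symm

lemma hasSum_choose_mul_expCoeff [RCLike 𝕜] {c d : Fin k → 𝕜} {r : 𝕜}
    (h : ∀ t, ∑ j, c j * (1 + t) ^ (j.1 + 1) = r + ∑ j, d j * t ^ (j.1 + 1)) (n : ℕ) :
    HasSum (fun m ↦ m.choose n * expCoeff c m) (NormedSpace.exp r * expCoeff d n) := by
  have hshift (t : 𝕜) : HasSum (fun n ↦ NormedSpace.exp r * expCoeff d n * t ^ n)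
      (NormedSpace.exp (∑ j, c j * (1 + t) ^ (j.1 + 1))) := by
    simpa only [h, NormedSpace.exp_add, mul_assoc] using
      (hasSum_expCoeff_mul_pow d t).mul_left (NormedSpace.exp r)
  simpa only [one_pow, mul_one, mul_comm] using
    hasSum_mul_choose_of_hasSum_add 1 (hasSum_expCoeff_mul_pow c) hshift n

end TupleSums

theorem factorialMoment_poissonOrderK_general (k : ℕ) (lam : ℝ) (n : ℕ) :
    HasSum (fun m : ℕ => (m.descFactorial n : ℝ) * poissonOrderK k lam m)
      ((n.factorial : ℝ) *
        ∑ f ∈ orderkTuples k n, ∏ j : Fin k,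
          lam ^ (f j).1 / (f j).1.factorial * ((k + 1).choose (j.1 + 2) : ℝ) ^ (f j).1) := by
  have hexpand (t : ℝ) : ∑ j : Fin k, lam * (1 + t) ^ (j.1 + 1) =
      k * lam + ∑ j : Fin k, lam * ((k + 1).choose (j.1 + 2) : ℝ) * t ^ (j.1 + 1) := by
    simp only [mul_assoc, ← Finset.mul_sum]
    rw [Fin.sum_univ_eq_sum_range (fun j ↦ (1 + t) ^ (j + 1)), sum_range_one_add_pow_succ,
      Fin.sum_univ_eq_sum_range (fun j ↦ ((k + 1).choose (j + 2) : ℝ) * t ^ (j + 1))]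
    ring
  have hsum := (hasSum_choose_mul_expCoeff hexpand n).mul_left
    (n.factorial * Real.exp (-(k * lam)))
  convert! hsum using 1
  · funext m
    rw [Nat.descFactorial_eq_factorial_mul_choose]
    simp only [poissonOrderK, expCoeff]
    push_cast; ring
  · rw [← Real.exp_eq_exp_ℝ, Real.exp_neg]
    field_simp
    simp only [expCoeff, mul_pow, mul_div_right_comm]

/-- The series defining the `n`-th factorial moment of the Poisson distribution of
order `k` converges, and equals the explicit combinatorial sum
`n! ∑_{n₁+2n₂+⋯+k n_k = n} ∏_{j=1}^k (λ^{n_j}/n_j!) C(k+1, j+1)^{n_j}`. -/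
theorem factorialMoment_poissonOrderK (k : ℕ) (hk : 1 ≤ k) (lam : ℝ) (hlam : 0 < lam)
    (n : ℕ) :
    HasSum (fun m : ℕ => (m.descFactorial n : ℝ) * poissonOrderK k lam m)
      ((n.factorial : ℝ) *
        ∑ f ∈ orderkTuples k n, ∏ j : Fin k,
          lam ^ (f j).1 / (f j).1.factorial * ((k + 1).choose (j.1 + 2) : ℝ) ^ (f j).1) := by
  exact factorialMoment_poissonOrderK_general k lam n
end

section
/- For every integer k ≥ 1 and every real λ > 0, the variance of the Poisson distribution of order k is σ²_k = Σ_{m=0}^∞ (m − μ_k)² · P_m(k,λ) = (1² + 2² + ⋯ + k²)·λ = k(k+1)(2k+1)λ/6, where μ_k = k(k+1)λ/2 is the mean, the series converging absolutely. -/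
/-!
The distribution is the law of `X₁ + 2 X₂ + ⋯ + k X_k` for independent Poisson variables `X_j` of
rate `λ`: its mass at `m` is the sum of the product masses over the finite fibre of tuples with
`n₁ + 2 n₂ + ⋯ + k n_k = m`. Variances of independent variables add and `Var (j X_j) = j² λ`,
so the variance is `(1² + ⋯ + k²) λ`. The variance of a single Poisson variable comes from its
factorial moments `𝔼[X (X - 1) ⋯ (X - p + 1)] = λ ^ p`.
-/

open scoped BigOperators

section

open MeasureTheory ProbabilityTheory
open scoped NNReal Nat

section PoissonMoments

theorem pow_div_factorial_mul_descFactorial (x : ℝ) (n p : ℕ) :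
    x ^ (n + p) / (n + p)! * ((n + p).descFactorial p : ℝ) = x ^ n / n ! * x ^ p := by
  have factorial_split : ((n + p)! : ℝ) = n ! * ((n + p).descFactorial p : ℝ) := by
    exact_mod_cast (by simpa only [Nat.add_sub_cancel] using
      (Nat.factorial_mul_descFactorial (Nat.le_add_left p n)).symm)
  have descFactorial_ne_zero : ((n + p).descFactorial p : ℝ) ≠ 0 :=
    Nat.cast_ne_zero.2 (Nat.descFactorial_pos.2 (Nat.le_add_left p n)).ne'
  rw [factorial_split, pow_add]
  field_simp

theorem sq_eq_descFactorial_two_add_one (n : ℕ) :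
    n ^ 2 = n.descFactorial 2 + n.descFactorial 1 := by
  cases n with
  | zero => rfl
  | succ n =>
    simp only [Nat.succ_descFactorial_succ, Nat.descFactorial_zero, Nat.descFactorial_one]
    ring

theorem natCast_sq_eq_descFactorial_add :
    (fun n : ℕ ↦ (n : ℝ) ^ 2) =
      (fun n : ℕ ↦ (n.descFactorial 2 : ℝ)) + fun n : ℕ ↦ (n.descFactorial 1 : ℝ) := by
  ext n
  simp only [Pi.add_apply]
  exact_mod_cast sq_eq_descFactorial_two_add_one n

variable (r : ℝ≥0)

theorem hasSum_descFactorial_poisson (p : ℕ) :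
    HasSum (fun n : ℕ ↦ Real.exp (-r) * r ^ n / n ! * (n.descFactorial p : ℝ)) (r ^ p) := by
  have head_eq_zero :
      ∑ n ∈ Finset.range p, Real.exp (-r) * r ^ n / n ! * (n.descFactorial p : ℝ) = 0 :=
    Finset.sum_eq_zero fun n hn ↦ by
      rw [Nat.descFactorial_of_lt (Finset.mem_range.1 hn), Nat.cast_zero, mul_zero]
  have tail_eq (n : ℕ) :
      Real.exp (-r) * r ^ (n + p) / (n + p)! * ((n + p).descFactorial p : ℝ) =
        Real.exp (-r) * r ^ n / n ! * r ^ p := by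
    rw [mul_div_assoc, mul_assoc, pow_div_factorial_mul_descFactorial, ← mul_assoc, mul_div_assoc]
  rw [← hasSum_nat_add_iff' p, head_eq_zero, sub_zero]
  simpa only [tail_eq, one_mul] using (hasSum_one_poissonMeasure r).mul_right ((r : ℝ) ^ p)

theorem integrable_descFactorial_poissonMeasure (p : ℕ) :
    Integrable (fun n : ℕ ↦ (n.descFactorial p : ℝ)) Po(r) := by
  simpa only [integrable_poissonMeasure_iff, Real.norm_natCast] using
    (hasSum_descFactorial_poisson r p).summable

theorem integral_descFactorial_poissonMeasure (p : ℕ) :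
    ∫ n, (n.descFactorial p : ℝ) ∂Po(r) = r ^ p := by
  simpa only [integral_poissonMeasure, smul_eq_mul] using
    (hasSum_descFactorial_poisson r p).tsum_eq

theorem memLp_two_natCast_poissonMeasure : MemLp (fun n : ℕ ↦ (n : ℝ)) 2 Po(r) := by
  rw [memLp_two_iff_integrable_sq .of_discrete, natCast_sq_eq_descFactorial_add]
  exact (integrable_descFactorial_poissonMeasure r 2).add
    (integrable_descFactorial_poissonMeasure r 1)

theorem integral_natCast_poissonMeasure : ∫ n : ℕ, (n : ℝ) ∂Po(r) = r := by
  simpa only [Nat.descFactorial_one, pow_one] using integral_descFactorial_poissonMeasure r 1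

theorem integral_natCast_sq_poissonMeasure : ∫ n : ℕ, (n : ℝ) ^ 2 ∂Po(r) = r ^ 2 + r := by
  rw [natCast_sq_eq_descFactorial_add, integral_add'
    (integrable_descFactorial_poissonMeasure r 2) (integrable_descFactorial_poissonMeasure r 1),
    integral_descFactorial_poissonMeasure, integral_descFactorial_poissonMeasure, pow_one]

theorem variance_natCast_poissonMeasure : Var[fun n : ℕ ↦ (n : ℝ); Po(r)] = r := by
  rw [variance_eq_sub (memLp_two_natCast_poissonMeasure r)]
  simp only [Pi.pow_apply, integral_natCast_sq_poissonMeasure, integral_natCast_poissonMeasure,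
    add_sub_cancel_left]

end PoissonMoments

section LinearCombination

variable {ι : Type*} [Fintype ι] (r : ι → ℝ≥0) (a : ι → ℝ)

theorem memLp_two_const_mul_eval_pi_poissonMeasure (i : ι) :
    MemLp (fun x : ι → ℕ ↦ a i * (x i : ℝ)) 2 (Measure.pi fun i ↦ Po(r i)) :=
  ((memLp_two_natCast_poissonMeasure (r i)).const_mul (a i)).comp_measurePreserving
    (measurePreserving_eval (fun i ↦ Po(r i)) i)

theorem memLp_two_sum_mul_pi_poissonMeasure :
    MemLp (fun x : ι → ℕ ↦ ∑ i, a i * (x i : ℝ)) 2 (Measure.pi fun i ↦ Po(r i)) :=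
  memLp_finsetSum _ fun i _ ↦ memLp_two_const_mul_eval_pi_poissonMeasure r a i

theorem integral_sum_mul_pi_poissonMeasure :
    ∫ x : ι → ℕ, ∑ i, a i * (x i : ℝ) ∂(Measure.pi fun i ↦ Po(r i)) = ∑ i, a i * r i := by
  rw [integral_finsetSum _ fun i _ ↦
    (memLp_two_const_mul_eval_pi_poissonMeasure r a i).integrable one_le_two]
  refine Finset.sum_congr rfl fun i _ ↦ ?_
  rw [integral_const_mul, integral_comp_eval (μ := fun i ↦ Po(r i)) (i := i)
    (f := fun n : ℕ ↦ (n : ℝ)) .of_discrete, integral_natCast_poissonMeasure]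

theorem variance_sum_mul_pi_poissonMeasure :
    Var[fun x : ι → ℕ ↦ ∑ i, a i * (x i : ℝ); Measure.pi fun i ↦ Po(r i)] =
      ∑ i, a i ^ 2 * r i := by
  have variance_sum := variance_sum_pi (X := fun i (n : ℕ) ↦ a i * (n : ℝ))
    fun i ↦ (memLp_two_natCast_poissonMeasure (r i)).const_mul (a i)
  simpa only [Finset.sum_fn, variance_const_mul, variance_natCast_poissonMeasure] using variance_sum

end LinearCombination

section Countable

variable {α : Type*} [Countable α] [MeasurableSpace α] [MeasurableSingletonClass α]
  {μ : Measure α}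

theorem hasSum_measureReal_singleton_smul {E : Type*} [NormedAddCommGroup E] [NormedSpace ℝ E]
    [CompleteSpace E] {f : α → E} (hf : Integrable f μ) :
    HasSum (fun a ↦ μ.real {a} • f a) (∫ a, f a ∂μ) := by
  rw [← Measure.sum_smul_dirac μ] at hf
  simpa only [Measure.sum_smul_dirac, integral_smul_measure, integral_dirac, measureReal_def]
    using hasSum_integral_measure hf

theorem hasSum_sq_sub_integral_mul_measureReal [IsFiniteMeasure μ] {X : α → ℝ}
    (hX : MemLp X 2 μ) :
    HasSum (fun a ↦ (X a - ∫ b, X b ∂μ) ^ 2 * μ.real {a}) Var[X; μ] := by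
  rw [variance_eq_integral hX.aemeasurable]
  simpa only [smul_eq_mul, mul_comm, Pi.sub_apply] using
    hasSum_measureReal_singleton_smul (hX.sub (memLp_const (∫ b, X b ∂μ))).integrable_sq

end Countable

theorem sum_fin_succ_eq_sum_Icc_one {M : Type*} [AddCommMonoid M] (f : ℕ → M) (k : ℕ) :
    ∑ j : Fin k, f (j.1 + 1) = ∑ i ∈ Finset.Icc 1 k, f i := by
  rw [Fin.sum_univ_eq_sum_range (fun j ↦ f (j + 1)), Finset.range_eq_Ico, Finset.sum_Ico_add']
  rfl

theorem sum_Icc_one_natCast (k : ℕ) :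
    ∑ i ∈ Finset.Icc 1 k, (i : ℝ) = (k : ℝ) * (k + 1) / 2 := by
  induction k with
  | zero => simp
  | succ k ih =>
    rw [Finset.sum_Icc_succ_top k.succ_pos, ih]
    push_cast
    ring

theorem sum_Icc_one_natCast_sq (k : ℕ) :
    ∑ i ∈ Finset.Icc 1 k, (i : ℝ) ^ 2 = (k : ℝ) * (k + 1) * (2 * k + 1) / 6 := by
  induction k with
  | zero => simp
  | succ k ih =>
    rw [Finset.sum_Icc_succ_top k.succ_pos, ih]
    push_cast
    ring

/-- The weighted sum `x₁ + 2 x₂ + ⋯ + k x_k`; coordinates are indexed from `0` by `Fin k`. -/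
def weightedSum {k : ℕ} (x : Fin k → ℕ) : ℕ :=
  ∑ j, (j.1 + 1) * x j

/-- The Poisson distribution of order `k` as a measure: the law of `X₁ + 2 X₂ + ⋯ + k X_k` for
independent Poisson variables `X_j` of rate `r`. -/
noncomputable def poissonOrderKMeasure (k : ℕ) (r : ℝ≥0) : Measure ℕ :=
  (Measure.pi fun _ : Fin k ↦ Po(r)).map weightedSum

instance (k : ℕ) (r : ℝ≥0) : IsProbabilityMeasure (poissonOrderKMeasure k r) :=
  Measure.isProbabilityMeasure_map .of_discrete

/-- The inclusion of the tuples with entries at most `m` into all tuples, under which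
`orderkTuples k m` becomes a fibre of `weightedSum`. -/
def boundedTupleEmbedding (k m : ℕ) : (Fin k → Fin (m + 1)) ↪ (Fin k → ℕ) :=
  Function.Embedding.arrowCongrRight Fin.valEmbedding

theorem apply_le_weightedSum {k : ℕ} (x : Fin k → ℕ) (j : Fin k) : x j ≤ weightedSum x :=
  (Nat.le_mul_of_pos_left (x j) j.1.succ_pos).trans
    (Finset.single_le_sum (f := fun i : Fin k ↦ (i.1 + 1) * x i)
      (fun _ _ ↦ Nat.zero_le _) (Finset.mem_univ j))

theorem coe_map_orderkTuples (k m : ℕ) :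
    ((orderkTuples k m).map (boundedTupleEmbedding k m) : Set (Fin k → ℕ)) =
      weightedSum ⁻¹' {m} := by
  ext x
  simp only [Finset.coe_map, Set.mem_image, Finset.mem_coe, Set.mem_preimage,
    Set.mem_singleton_iff]
  constructor
  · rintro ⟨f, hf, rfl⟩
    exact (Finset.mem_filter.1 hf).2
  · intro hx
    have entry_lt (j : Fin k) : x j < m + 1 :=
      Nat.lt_succ_of_le (hx ▸ apply_le_weightedSum x j)
    exact ⟨fun j ↦ ⟨x j, entry_lt j⟩, Finset.mem_filter.2 ⟨Finset.mem_univ _, hx⟩, rfl⟩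

theorem measureReal_pi_singleton {ι : Type*} [Fintype ι] {α : ι → Type*}
    [∀ i, MeasurableSpace (α i)] (μ : ∀ i, Measure (α i)) [∀ i, SigmaFinite (μ i)]
    (x : ∀ i, α i) : (Measure.pi μ).real {x} = ∏ i, (μ i).real {x i} := by
  simp only [measureReal_def, Measure.pi_singleton, ENNReal.toReal_prod]

theorem pi_poissonMeasure_real_singleton {ι : Type*} [Fintype ι] (r : ℝ≥0) (x : ι → ℕ) :
    (Measure.pi fun _ : ι ↦ Po(r)).real {x} =
      Real.exp (-(Fintype.card ι * r)) * ∏ i, (r : ℝ) ^ x i / (x i)! := by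
  simp only [measureReal_pi_singleton, poissonMeasure_real_singleton, mul_div_assoc,
    Finset.prod_mul_distrib, Finset.prod_const, Finset.card_univ, ← Real.exp_nat_mul, mul_neg]

theorem poissonOrderKMeasure_real_singleton (k : ℕ) (r : ℝ≥0) (m : ℕ) :
    (poissonOrderKMeasure k r).real {m} = poissonOrderK k r m := by
  rw [poissonOrderKMeasure, map_measureReal_apply .of_discrete .of_discrete,
    ← coe_map_orderkTuples, ← sum_measureReal_singleton, Finset.sum_map, poissonOrderK,
    Finset.mul_sum]
  refine Finset.sum_congr rfl fun f _ ↦ ?_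
  rw [pi_poissonMeasure_real_singleton, Fintype.card_fin]
  rfl

section OrderKMoments

variable (k : ℕ) (r : ℝ≥0)

theorem natCast_comp_weightedSum :
    (fun m : ℕ ↦ (m : ℝ)) ∘ weightedSum (k := k) =
      fun x ↦ ∑ j : Fin k, ((j.1 + 1 : ℕ) : ℝ) * (x j : ℝ) := by
  ext x
  simp only [Function.comp_apply, weightedSum, Nat.cast_sum, Nat.cast_mul]

theorem memLp_two_natCast_poissonOrderKMeasure :
    MemLp (fun m : ℕ ↦ (m : ℝ)) 2 (poissonOrderKMeasure k r) := by
  rw [poissonOrderKMeasure, memLp_map_measure_iff .of_discrete .of_discrete,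
    natCast_comp_weightedSum]
  exact memLp_two_sum_mul_pi_poissonMeasure _ _

theorem integral_natCast_poissonOrderKMeasure :
    ∫ m : ℕ, (m : ℝ) ∂poissonOrderKMeasure k r = (∑ i ∈ Finset.Icc 1 k, (i : ℝ)) * r := by
  rw [poissonOrderKMeasure, integral_map .of_discrete .of_discrete]
  change ∫ x, ((fun m : ℕ ↦ (m : ℝ)) ∘ weightedSum) x ∂_ = _
  rw [natCast_comp_weightedSum, integral_sum_mul_pi_poissonMeasure, ← Finset.sum_mul,
    sum_fin_succ_eq_sum_Icc_one fun i ↦ (i : ℝ)]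

theorem variance_natCast_poissonOrderKMeasure :
    Var[fun m : ℕ ↦ (m : ℝ); poissonOrderKMeasure k r] =
      (∑ i ∈ Finset.Icc 1 k, (i : ℝ) ^ 2) * r := by
  rw [poissonOrderKMeasure, variance_map .of_discrete .of_discrete, natCast_comp_weightedSum,
    variance_sum_mul_pi_poissonMeasure, ← Finset.sum_mul,
    sum_fin_succ_eq_sum_Icc_one fun i ↦ (i : ℝ) ^ 2]

theorem hasSum_sq_sub_mean_mul_poissonOrderK :
    HasSum (fun m : ℕ ↦
        ((m : ℝ) - (∑ i ∈ Finset.Icc 1 k, (i : ℝ)) * r) ^ 2 * poissonOrderK k r m)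
      ((∑ i ∈ Finset.Icc 1 k, (i : ℝ) ^ 2) * r) := by
  simpa only [integral_natCast_poissonOrderKMeasure, variance_natCast_poissonOrderKMeasure,
    poissonOrderKMeasure_real_singleton] using
    hasSum_sq_sub_integral_mul_measureReal (memLp_two_natCast_poissonOrderKMeasure k r)

end OrderKMoments

end

/-- The variance of the Poisson distribution of order `k` is
`σ²_k = ∑_{m=0}^∞ (m − μ_k)² P_m(k,λ) = (1² + 2² + ⋯ + k²) λ = k(k+1)(2k+1)λ/6`,
where `μ_k = k(k+1)λ/2` is the mean, the series converging absolutely. -/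
theorem poissonOrderK_variance (k : ℕ) (hk : 1 ≤ k) (lam : ℝ) (hlam : 0 < lam) :
    Summable (fun m : ℕ =>
      |((m : ℝ) - (k : ℝ) * (k + 1) / 2 * lam) ^ 2 * poissonOrderK k lam m|) ∧
    HasSum (fun m : ℕ =>
        ((m : ℝ) - (k : ℝ) * (k + 1) / 2 * lam) ^ 2 * poissonOrderK k lam m)
      ((k : ℝ) * (k + 1) * (2 * k + 1) / 6 * lam) ∧
    (∑ i ∈ Finset.Icc 1 k, (i : ℝ) ^ 2) * lam
      = (k : ℝ) * (k + 1) * (2 * k + 1) / 6 * lam := by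
  lift lam to NNReal using hlam.le
  have variance_hasSum := hasSum_sq_sub_mean_mul_poissonOrderK k lam
  rw [sum_Icc_one_natCast, sum_Icc_one_natCast_sq] at variance_hasSum
  exact ⟨variance_hasSum.summable.abs, variance_hasSum, by rw [sum_Icc_one_natCast_sq]⟩
end

section
/- For every integer k ≥ 1 and every real λ > 0, the third factorial moment of the Poisson distribution of order k is M_{(3)}(k,λ) = κ₁³ λ³ + 6 κ₁ κ₂ λ² + 6 κ₃ λ, where κ_j = C(k+1, j+1); equivalently M_{(3)}(k,λ) = (k(k+1)/2)³ λ³ + 2 (k(k+1)/2)² (k−1) λ² + ((k−2)(k−1)k(k+1)/4) λ. -/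
open scoped BigOperators

/-- `κ_j = C(k+1, j+1)`, as a real number (it vanishes for `j > k`). -/
noncomputable def kappa (k j : ℕ) : ℝ := ((k + 1).choose (j + 1) : ℝ)

open Finset

/- The order-`k` Poisson law is the law of `N₁ + 2 N₂ + ⋯ + k N_k` for independent Poisson
variables `N_j` of rate `λ`. A Poisson variable satisfies `E[N g(N)] = λ E[g(N + 1)]`; applied in
each coordinate to `S = ∑ aᵢ Nᵢ`, where `Nᵢ` has rate `rᵢ`, this gives
`E[S g(S)] = ∑ rᵢ aᵢ E[g(S + aᵢ)]`. Taking `g(s) = C(s - 1, n)` and expanding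
`C(S + aᵢ - 1, n)` by Vandermonde yields the recurrence
`(n + 1) Bₙ₊₁ = ∑_{p + q = n} (q + 1) c_{q+1} B_p` for the binomial moments `Bₙ = E[C(S, n)]`,
where `c_q = ∑ rᵢ C(aᵢ, q)`. For the order-`k` law the hockey-stick identity gives `c_q = λ κ_q`,
and the third factorial moment is `6 B₃`. -/

theorem mul_pred_choose (a n : ℕ) : a * (a - 1).choose n = (n + 1) * a.choose (n + 1) := by
  cases a with
  | zero => simp
  | succ a => rw [Nat.add_sub_cancel, Nat.add_one_mul_choose_eq, mul_comm]

theorem mul_add_pred_choose (s a n : ℕ) :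
    a * (s + a - 1).choose n =
      ∑ p ∈ antidiagonal n, (p.2 + 1) * a.choose (p.2 + 1) * s.choose p.1 := by
  obtain rfl | ha := a.eq_zero_or_pos
  · simp
  · rw [Nat.add_sub_assoc ha, Nat.add_choose_eq, mul_sum]
    refine sum_congr rfl fun p _ ↦ ?_
    rw [← mul_pred_choose]
    ring

theorem sum_fin_succ_choose_succ (k q : ℕ) :
    ∑ j : Fin k, (j.1 + 1).choose (q + 1) = (k + 1).choose (q + 2) := by
  induction k with
  | zero => simp [Nat.choose_eq_zero_of_lt]
  | succ k ih =>
    rw [Fin.sum_univ_castSucc, Nat.choose_succ_succ (k + 1), add_comm ((k + 1).choose (q + 1))]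
    exact congrArg (· + _) ih

theorem hasSum_fin_pi_prod {𝕜 β : Type*} [RCLike 𝕜] {k : ℕ} {f : Fin k → β → 𝕜} {s : Fin k → 𝕜}
    (h : ∀ j, HasSum (f j) (s j)) :
    HasSum (fun x : Fin k → β ↦ ∏ j, f j (x j)) (∏ j, s j) := by
  induction k with
  | zero => simp
  | succ k ih =>
    have tail := ih fun j ↦ h j.succ
    have summable_product :=
      summable_mul_of_summable_norm (h 0).summable.norm tail.summable.norm
    have product := (h 0).mul tail summable_product
    rw [← (Fin.consEquiv fun _ ↦ β).hasSum_iff]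
    simpa [Function.comp_def, Fin.prod_univ_succ, Fin.consEquiv] using product

theorem hasSum_pi_prod {𝕜 ι β : Type*} [RCLike 𝕜] [Fintype ι] {f : ι → β → 𝕜} {s : ι → 𝕜}
    (h : ∀ i, HasSum (f i) (s i)) :
    HasSum (fun x : ι → β ↦ ∏ i, f i (x i)) (∏ i, s i) := by
  let e := (Fintype.equivFin ι).symm
  rw [← (e.arrowCongr (Equiv.refl β)).hasSum_iff, ← e.prod_comp]
  convert hasSum_fin_pi_prod fun j ↦ h (e j) using 2 with x
  simp [← e.prod_comp]

section IndependentPoisson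

variable {ι : Type*} [Fintype ι]

/-- The joint probability mass function of independent Poisson variables with rates `r i`. Rates of
any sign are allowed, which makes it a signed weight in general. -/
noncomputable def poissonWeight (r : ι → ℝ) (x : ι → ℕ) : ℝ :=
  ∏ i, Real.exp (-r i) * (r i ^ x i / (x i).factorial)

/-- The value `∑ aᵢ xᵢ` of a compound Poisson variable with jump sizes `a i`, when `x i` counts the
jumps of size `a i`. -/
def jumpSum (a x : ι → ℕ) : ℕ := ∑ i, a i * x i

/-- The `n`-th binomial moment `E[C(S, n)]` of the compound Poisson variable `S = ∑ aᵢ Nᵢ`, where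
the `Nᵢ` are independent Poisson variables with rates `r i`. -/
noncomputable def binomialMoment (r : ι → ℝ) (a : ι → ℕ) (n : ℕ) : ℝ :=
  ∑' x, ((jumpSum a x).choose n : ℝ) * poissonWeight r x

theorem hasSum_poissonWeight (r : ι → ℝ) : HasSum (poissonWeight r) 1 := by
  have marginal (i : ι) :
      HasSum (fun n : ℕ ↦ Real.exp (-r i) * (r i ^ n / n.factorial)) 1 := by
    have h := (NormedSpace.expSeries_div_hasSum_exp (r i)).mul_left (Real.exp (-r i))
    rwa [← Real.exp_eq_exp_ℝ, ← Real.exp_add, neg_add_cancel, Real.exp_zero] at h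
  have product := hasSum_pi_prod marginal
  rwa [prod_const_one] at product

theorem binomialMoment_zero (r : ι → ℝ) (a : ι → ℕ) : binomialMoment r a 0 = 1 := by
  simpa [binomialMoment] using (hasSum_poissonWeight r).tsum_eq

theorem jumpSum_add_single [DecidableEq ι] (a x : ι → ℕ) (i : ι) :
    jumpSum a (x + Pi.single i 1) = jumpSum a x + a i := by
  simp [jumpSum, mul_add, sum_add_distrib, Pi.single_apply]

theorem poissonWeight_add_single [DecidableEq ι] (r : ι → ℝ) (x : ι → ℕ) (i : ι) :
    (x i + 1) * poissonWeight r (x + Pi.single i 1) = r i * poissonWeight r x := by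
  let y : ι → ℕ := x + Pi.single i 1
  have others : ∏ j ∈ univ.erase i, Real.exp (-r j) * (r j ^ y j / (y j).factorial) =
      ∏ j ∈ univ.erase i, Real.exp (-r j) * (r j ^ x j / (x j).factorial) :=
    prod_congr rfl fun j hj ↦ by simp [y, ne_of_mem_erase hj]
  unfold poissonWeight
  rw [← mul_prod_erase _ _ (mem_univ i), ← mul_prod_erase _ _ (mem_univ i), others,
    Pi.add_apply, Pi.single_eq_same, Nat.factorial_succ]
  push_cast
  field_simp
  ring

theorem hasSum_apply_mul_poissonWeight [DecidableEq ι] {r : ι → ℝ} {F : (ι → ℕ) → ℝ} {i : ι}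
    {s : ℝ} (h : HasSum (fun x ↦ F (x + Pi.single i 1) * poissonWeight r x) s) :
    HasSum (fun x ↦ x i * F x * poissonWeight r x) (r i * s) := by
  have zero_off_range (x : ι → ℕ) (hx : x ∉ Set.range fun y : ι → ℕ ↦ y + Pi.single i 1) :
      x i * F x * poissonWeight r x = 0 := by
    have hxi : x i = 0 := by
      by_contra hne
      refine hx ⟨x - Pi.single i 1, tsub_add_cancel_of_le fun j ↦ ?_⟩
      obtain rfl | hj := eq_or_ne j i
      · simpa using Nat.one_le_iff_ne_zero.mpr hne
      · simp [hj]
    simp [hxi]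
  rw [← (add_left_injective (Pi.single i 1)).hasSum_iff zero_off_range]
  refine (h.mul_left (r i)).congr_fun fun x ↦ ?_
  simp only [Function.comp_apply, Pi.add_apply, Pi.single_eq_same, Nat.cast_add, Nat.cast_one]
  linear_combination F (x + Pi.single i 1) * poissonWeight_add_single r x i

theorem hasSum_jumpSum_mul_poissonWeight {r : ι → ℝ} {a : ι → ℕ} {g : ℕ → ℝ} {s : ι → ℝ}
    (h : ∀ i, HasSum (fun x ↦ a i * g (jumpSum a x + a i) * poissonWeight r x) (s i)) :
    HasSum (fun x ↦ jumpSum a x * g (jumpSum a x) * poissonWeight r x) (∑ i, r i * s i) := by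
  classical
  have coordinate (i : ι) :
      HasSum (fun x ↦ x i * (a i * g (jumpSum a x)) * poissonWeight r x) (r i * s i) :=
    hasSum_apply_mul_poissonWeight (by simpa only [jumpSum_add_single] using h i)
  have expand (x : ι → ℕ) : jumpSum a x * g (jumpSum a x) * poissonWeight r x =
      ∑ i, x i * (a i * g (jumpSum a x)) * poissonWeight r x := by
    simp only [← mul_assoc, ← sum_mul]
    simp only [jumpSum, Nat.cast_sum, Nat.cast_mul, mul_comm]
  exact (hasSum_sum fun i _ ↦ coordinate i).congr_fun expand

theorem hasSum_choose_succ_mul_poissonWeight {r : ι → ℝ} {a : ι → ℕ} {n : ℕ}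
    (h : ∀ p ≤ n, Summable fun x ↦ ((jumpSum a x).choose p : ℝ) * poissonWeight r x) :
    HasSum (fun x ↦ (n + 1) * (((jumpSum a x).choose (n + 1) : ℝ) * poissonWeight r x))
      (∑ p ∈ antidiagonal n,
        (p.2 + 1) * (∑ i, r i * (a i).choose (p.2 + 1)) * binomialMoment r a p.1) := by
  have shifted (i : ι) :
      HasSum (fun x ↦ a i * ((jumpSum a x + a i - 1).choose n : ℝ) * poissonWeight r x)
        (∑ p ∈ antidiagonal n,
          (p.2 + 1) * (a i).choose (p.2 + 1) * binomialMoment r a p.1) := by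
    have vandermonde (x : ι → ℕ) :
        a i * ((jumpSum a x + a i - 1).choose n : ℝ) * poissonWeight r x =
          ∑ p ∈ antidiagonal n, (p.2 + 1) * (a i).choose (p.2 + 1) *
            ((jumpSum a x).choose p.1 * poissonWeight r x) := by
      simp only [← mul_assoc, ← sum_mul]
      exact_mod_cast congrArg (fun m : ℕ ↦ (m : ℝ) * poissonWeight r x)
        (mul_add_pred_choose (jumpSum a x) (a i) n)
    have moments_hasSum (p : ℕ × ℕ) (hp : p ∈ antidiagonal n) :=
      (h p.1 (Nat.le.intro (mem_antidiagonal.mp hp))).hasSum.mul_left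
        ((p.2 + 1) * (a i).choose (p.2 + 1) : ℝ)
    exact (hasSum_sum moments_hasSum).congr_fun vandermonde
  convert hasSum_jumpSum_mul_poissonWeight (g := fun s ↦ ((s - 1).choose n : ℝ)) shifted
    using 1
  · funext x
    rw [← mul_assoc]
    exact_mod_cast congrArg (fun m : ℕ ↦ (m : ℝ) * poissonWeight r x)
      (mul_pred_choose (jumpSum a x) n).symm
  · simp only [mul_sum, sum_mul]
    rw [sum_comm]
    exact sum_congr rfl fun i _ ↦ sum_congr rfl fun p _ ↦ by ring

theorem summable_choose_mul_poissonWeight (r : ι → ℝ) (a : ι → ℕ) (n : ℕ) :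
    Summable fun x ↦ ((jumpSum a x).choose n : ℝ) * poissonWeight r x := by
  induction n using Nat.strong_induction_on with
  | _ n ih =>
    cases n with
    | zero => simpa using (hasSum_poissonWeight r).summable
    | succ n =>
      have h := hasSum_choose_succ_mul_poissonWeight fun p hp ↦ ih p (Nat.lt_succ_of_le hp)
      exact (summable_mul_left_iff n.cast_add_one_ne_zero).mp h.summable

theorem binomialMoment_succ (r : ι → ℝ) (a : ι → ℕ) (n : ℕ) :
    (n + 1) * binomialMoment r a (n + 1) = ∑ p ∈ antidiagonal n,
      (p.2 + 1) * (∑ i, r i * (a i).choose (p.2 + 1)) * binomialMoment r a p.1 := by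
  rw [binomialMoment, ← tsum_mul_left]
  exact (hasSum_choose_succ_mul_poissonWeight fun p _ ↦
    summable_choose_mul_poissonWeight r a p).tsum_eq

end IndependentPoisson

theorem jumpSum_preimage_singleton (k m : ℕ) :
    jumpSum (fun j : Fin k ↦ j.1 + 1) ⁻¹' {m} =
      ((orderkTuples k m).image fun f j ↦ (f j : ℕ) : Finset (Fin k → ℕ)) := by
  ext x
  simp only [Set.mem_preimage, Set.mem_singleton_iff, coe_image, Set.mem_image, mem_coe,
    orderkTuples, mem_filter_univ]
  constructor
  · intro hx
    have coordinate_lt (j : Fin k) : x j < m + 1 := by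
      have term_le : (j.1 + 1) * x j ≤ m :=
        hx ▸ single_le_sum (f := fun j : Fin k ↦ (j.1 + 1) * x j) (fun _ _ ↦ Nat.zero_le _)
          (mem_univ j)
      exact Nat.lt_succ_of_le ((Nat.le_mul_of_pos_left _ j.1.succ_pos).trans term_le)
    exact ⟨fun j ↦ ⟨x j, coordinate_lt j⟩, hx, rfl⟩
  · rintro ⟨f, hf, rfl⟩
    exact hf

theorem poissonOrderK_eq_tsum_poissonWeight (k : ℕ) (lam : ℝ) (m : ℕ) :
    poissonOrderK k lam m =
      ∑' x : jumpSum (fun j : Fin k ↦ j.1 + 1) ⁻¹' {m}, poissonWeight (fun _ ↦ lam) x.1 := by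
  have coe_injective : Function.Injective fun (f : Fin k → Fin (m + 1)) j ↦ (f j : ℕ) :=
    Fin.val_injective.comp_left
  rw [jumpSum_preimage_singleton, Finset.tsum_subtype', sum_image coe_injective.injOn,
    poissonOrderK, mul_sum]
  refine sum_congr rfl fun f _ ↦ ?_
  simp [poissonWeight, prod_mul_distrib, ← Real.exp_nat_mul]

theorem hasSum_mul_poissonOrderK {k : ℕ} {lam : ℝ} {g : ℕ → ℝ} {s : ℝ}
    (h : HasSum (fun x ↦ g (jumpSum (fun j : Fin k ↦ j.1 + 1) x) *
      poissonWeight (fun _ ↦ lam) x) s) :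
    HasSum (fun m ↦ g m * poissonOrderK k lam m) s := by
  have fiberwise := h.tsum_fiberwise (jumpSum fun j : Fin k ↦ j.1 + 1)
  refine fiberwise.congr_fun fun m ↦ ?_
  rw [poissonOrderK_eq_tsum_poissonWeight, ← tsum_mul_left]
  exact tsum_congr fun x ↦ by rw [x.2]

theorem hasSum_descFactorial_mul_poissonOrderK (k : ℕ) (lam : ℝ) (n : ℕ) :
    HasSum (fun m ↦ (m.descFactorial n : ℝ) * poissonOrderK k lam m)
      (n.factorial * binomialMoment (fun _ : Fin k ↦ lam) (fun j ↦ j.1 + 1) n) := by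
  simp only [Nat.descFactorial_eq_factorial_mul_choose, Nat.cast_mul, mul_assoc]
  have binomial := hasSum_mul_poissonOrderK (g := fun m ↦ (m.choose n : ℝ))
    (summable_choose_mul_poissonWeight (fun _ : Fin k ↦ lam) (fun j ↦ j.1 + 1) n).hasSum
  exact binomial.mul_left (n.factorial : ℝ)

theorem binomialMoment_orderK_succ (k : ℕ) (lam : ℝ) (n : ℕ) :
    (n + 1) * binomialMoment (fun _ : Fin k ↦ lam) (fun j ↦ j.1 + 1) (n + 1) =
      lam * ∑ p ∈ antidiagonal n, (p.2 + 1) * kappa k (p.2 + 1) *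
        binomialMoment (fun _ : Fin k ↦ lam) (fun j ↦ j.1 + 1) p.1 := by
  rw [binomialMoment_succ, mul_sum]
  refine sum_congr rfl fun p _ ↦ ?_
  rw [kappa, ← sum_fin_succ_choose_succ, ← mul_sum]
  push_cast
  ring

theorem binomialMoment_orderK_three (k : ℕ) (lam : ℝ) :
    6 * binomialMoment (fun _ : Fin k ↦ lam) (fun j ↦ j.1 + 1) 3 =
      kappa k 1 ^ 3 * lam ^ 3 + 6 * kappa k 1 * kappa k 2 * lam ^ 2 + 6 * kappa k 3 * lam := by
  set B := binomialMoment (fun _ : Fin k ↦ lam) (fun j ↦ j.1 + 1) with hB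
  have zeroth : B 0 = 1 := binomialMoment_zero _ _
  have first : B 1 = lam * kappa k 1 := by
    simpa [← hB, zeroth] using binomialMoment_orderK_succ k lam 0
  have second : 2 * B 2 = lam * (2 * kappa k 2 + kappa k 1 * B 1) := by
    have h := binomialMoment_orderK_succ k lam 1
    norm_num [Nat.antidiagonal_succ, ← hB, zeroth] at h
    exact h
  have third : 3 * B 3 = lam * (3 * kappa k 3 + (2 * kappa k 2 * B 1 + kappa k 1 * B 2)) := by
    have h := binomialMoment_orderK_succ k lam 2
    norm_num [Nat.antidiagonal_succ, ← hB, zeroth] at h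
    exact h
  linear_combination 2 * third + lam * kappa k 1 * second +
    (4 * lam * kappa k 2 + lam ^ 2 * kappa k 1 ^ 2) * first

theorem kappa_succ (k j : ℕ) : kappa k (j + 1) = kappa k j * (k - j) / (j + 2) := by
  have absorption : kappa k (j + 1) * (j + 2) = kappa k j * (k - j) := by
    obtain hjk | hkj := le_or_gt j k
    · have h := Nat.choose_succ_right_eq (k + 1) (j + 1)
      rw [Nat.add_sub_add_right] at h
      simpa [kappa, Nat.cast_sub hjk, add_assoc, one_add_one_eq_two]
        using congrArg (Nat.cast (R := ℝ)) h
    · have succ_lt : k + 1 < j + 1 + 1 := by lia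
      simp [kappa, Nat.choose_eq_zero_of_lt, hkj, succ_lt]
  rw [eq_div_iff (by positivity), absorption]

theorem thirdFactorialMoment_kappa_eq (k : ℕ) (lam : ℝ) :
    kappa k 1 ^ 3 * lam ^ 3 + 6 * kappa k 1 * kappa k 2 * lam ^ 2 + 6 * kappa k 3 * lam
      = ((k : ℝ) * (k + 1) / 2) ^ 3 * lam ^ 3
        + 2 * ((k : ℝ) * (k + 1) / 2) ^ 2 * ((k : ℝ) - 1) * lam ^ 2
        + ((k : ℝ) - 2) * ((k : ℝ) - 1) * k * (k + 1) / 4 * lam := by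
  have kappa_zero : kappa k 0 = k + 1 := by simp [kappa]
  simp only [kappa_succ, kappa_zero]
  push_cast
  ring

theorem poissonOrderK_thirdFactorialMoment_general (k : ℕ) (lam : ℝ) :
    HasSum (fun m : ℕ => (m.descFactorial 3 : ℝ) * poissonOrderK k lam m)
      (kappa k 1 ^ 3 * lam ^ 3 + 6 * kappa k 1 * kappa k 2 * lam ^ 2 + 6 * kappa k 3 * lam) := by
  rw [← binomialMoment_orderK_three]
  exact hasSum_descFactorial_mul_poissonOrderK k lam 3

/-- The third factorial moment of the Poisson distribution of order `k` is
`M_{(3)}(k,λ) = κ₁³λ³ + 6κ₁κ₂λ² + 6κ₃λ`, equivalently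
`(k(k+1)/2)³λ³ + 2(k(k+1)/2)²(k−1)λ² + ((k−2)(k−1)k(k+1)/4)λ`. -/
theorem poissonOrderK_thirdFactorialMoment (k : ℕ) (hk : 1 ≤ k) (lam : ℝ) (hlam : 0 < lam) :
    HasSum (fun m : ℕ => (m.descFactorial 3 : ℝ) * poissonOrderK k lam m)
      (kappa k 1 ^ 3 * lam ^ 3 + 6 * kappa k 1 * kappa k 2 * lam ^ 2 + 6 * kappa k 3 * lam) ∧
    kappa k 1 ^ 3 * lam ^ 3 + 6 * kappa k 1 * kappa k 2 * lam ^ 2 + 6 * kappa k 3 * lam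
      = ((k : ℝ) * (k + 1) / 2) ^ 3 * lam ^ 3
        + 2 * ((k : ℝ) * (k + 1) / 2) ^ 2 * ((k : ℝ) - 1) * lam ^ 2
        + ((k : ℝ) - 2) * ((k : ℝ) - 1) * k * (k + 1) / 4 * lam := by
  exact ⟨poissonOrderK_thirdFactorialMoment_general k lam, thirdFactorialMoment_kappa_eq k lam⟩
end

section
/- For every integer k ≥ 1 and every real λ > 0, the fourth factorial moment of the Poisson distribution of order k is M_{(4)}(k,λ) = κ₁⁴ λ⁴ + 12 κ₁² κ₂ λ³ + (12 κ₂² + 24 κ₁ κ₃) λ² + 24 κ₄ λ, where κ_j = C(k+1, j+1). -/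
open scoped BigOperators

/-!
The factorial moment generating function `E (1 + t) ^ X` has the binomial moments `E C(X, n)` as its
coefficients, and Vandermonde's identity makes it multiplicative over independent sums. For
`X = N₁ + 2 N₂ + ⋯ + k N_k` with independent Poisson variables `N_j` of mean `λ` it is therefore
`∏ⱼ exp (λ ((1 + t) ^ j - 1)) = exp (λ ∑ᵢ κ_i t ^ i)`, with `i ≥ 1`, the coefficients `κ_i`
arising from the hockey-stick identity `∑ⱼ C(j, i) = C(k + 1, i + 1)`. The fourth coefficient of
this exponential is read off the recurrence given by its logarithmic derivative.
-/

open PowerSeries Finset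

section ExpSubst

variable {A : Type*} [CommRing A]

theorem coeff_subst_eq_sum_range {g : A⟦X⟧} (hg : constantCoeff g = 0) (f : A⟦X⟧) (n : ℕ) :
    coeff n (f.subst g) = ∑ d ∈ range (n + 1), coeff d f * coeff n (g ^ d) := by
  rw [coeff_subst' (.of_constantCoeff_zero' hg)]
  refine finsum_eq_sum_of_support_subset _ fun d hd ↦ ?_
  by_contra hdn
  have hnd : n < d := by simpa using hdn
  exact hd (by simp [X_pow_dvd_iff.1 (pow_dvd_pow_of_dvd (X_dvd_iff.2 hg) d) n hnd])

theorem rescale_subst {g : A⟦X⟧} (hg : constantCoeff g = 0) (a : A) (f : A⟦X⟧) :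
    (rescale a f).subst g = f.subst (a • g) := by
  have hg' : HasSubst g := .of_constantCoeff_zero' hg
  rw [rescale_eq_subst, subst_comp_subst_apply (.smul_X' a) hg', subst_smul hg', subst_X hg']

variable [Algebra ℚ A]

theorem constantCoeff_exp_subst {f : A⟦X⟧} (hf : constantCoeff f = 0) :
    constantCoeff ((exp A).subst f) = 1 := by
  simpa using coeff_subst_eq_sum_range hf (exp A) 0

theorem derivative_exp_subst {f : A⟦X⟧} (hf : constantCoeff f = 0) :
    d⁄dX A ((exp A).subst f) = d⁄dX A f * (exp A).subst f := by
  rw [derivative_subst (.of_constantCoeff_zero' hf), derivative_exp, mul_comm]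

theorem coeff_succ_exp_subst {f : A⟦X⟧} (hf : constantCoeff f = 0) (n : ℕ) :
    (n + 1) * coeff (n + 1) ((exp A).subst f) =
      ∑ p ∈ antidiagonal n,
        (p.1 + 1) * coeff (p.1 + 1) f * coeff p.2 ((exp A).subst f) := by
  have h := congrArg (coeff n) (derivative_exp_subst hf)
  simpa only [coeff_mul, coeff_derivative, mul_comm (coeff (_ + 1) _)] using h

theorem factorial_four_mul_coeff_four_exp_subst {f : A⟦X⟧} (hf : constantCoeff f = 0) :
    (Nat.factorial 4 : A) * coeff 4 ((exp A).subst f) =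
      coeff 1 f ^ 4 + 12 * coeff 1 f ^ 2 * coeff 2 f
        + (12 * coeff 2 f ^ 2 + 24 * coeff 1 f * coeff 3 f) + 24 * coeff 4 f := by
  have h₀ : coeff 0 ((exp A).subst f) = 1 := by simpa using constantCoeff_exp_subst hf
  have h₁ := coeff_succ_exp_subst hf 0
  have h₂ := coeff_succ_exp_subst hf 1
  have h₃ := coeff_succ_exp_subst hf 2
  have h₄ := coeff_succ_exp_subst hf 3
  simp only [Nat.sum_antidiagonal_eq_sum_range_succ_mk, sum_range_succ, sum_range_zero, h₀,
    Nat.reduceAdd, Nat.reduceSub] at h₁ h₂ h₃ h₄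
  push_cast [Nat.factorial] at h₁ h₂ h₃ h₄ ⊢
  linear_combination 6 * h₄ + 2 * coeff 1 f * h₃
    + (coeff 1 f ^ 2 + 6 * coeff 2 f) * h₂
    + (coeff 1 f ^ 3 + 10 * coeff 1 f * coeff 2 f + 18 * coeff 3 f) * h₁

variable [IsAddTorsionFree A]

theorem eq_exp_subst_of_derivative_eq_mul {f P : A⟦X⟧} (hf : constantCoeff f = 0)
    (hP : d⁄dX A P = d⁄dX A f * P) (hP₀ : constantCoeff P = 1) : P = (exp A).subst f := by
  -- Both `P` and `exp f` are inverse to `exp (-f)`.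
  have hf' : constantCoeff (-f) = 0 := by simp [hf]
  have mul_exp_neg {Q : A⟦X⟧} (hQ : d⁄dX A Q = d⁄dX A f * Q) (hQ₀ : constantCoeff Q = 1) :
      Q * (exp A).subst (-f) = 1 := by
    refine derivative.ext ?_ (by simp [hQ₀, constantCoeff_exp_subst hf'])
    rw [Derivation.leibniz, derivative_exp_subst hf', hQ]
    simp only [map_neg, smul_eq_mul, Derivation.map_one_eq_zero]
    ring
  have hPN := mul_exp_neg hP hP₀
  have hEN := mul_exp_neg (derivative_exp_subst hf) (constantCoeff_exp_subst hf)
  linear_combination (exp A).subst f * hPN - P * hEN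

theorem exp_subst_add {f g : A⟦X⟧} (hf : constantCoeff f = 0) (hg : constantCoeff g = 0) :
    (exp A).subst (f + g) = (exp A).subst f * (exp A).subst g := by
  refine (eq_exp_subst_of_derivative_eq_mul (by simp [hf, hg]) ?_ ?_).symm
  · rw [Derivation.leibniz, derivative_exp_subst hf, derivative_exp_subst hg, map_add]
    simp only [smul_eq_mul]
    ring
  · simp [constantCoeff_exp_subst hf, constantCoeff_exp_subst hg]

theorem exp_subst_sum {ι : Type*} (s : Finset ι) {f : ι → A⟦X⟧}
    (hf : ∀ i ∈ s, constantCoeff (f i) = 0) :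
    (exp A).subst (∑ i ∈ s, f i) = ∏ i ∈ s, (exp A).subst (f i) := by
  induction s using Finset.cons_induction with
  | empty => exact (eq_exp_subst_of_derivative_eq_mul (by simp) (by simp) (by simp)).symm
  | cons i s hi ih =>
    rw [forall_mem_cons] at hf
    rw [sum_cons, prod_cons, exp_subst_add hf.1 (by simpa using sum_eq_zero hf.2), ih hf.2]

end ExpSubst

theorem coeff_one_add_X_pow_eq_choose (R : Type*) [CommSemiring R] (a n : ℕ) :
    coeff n ((1 + X) ^ a : R⟦X⟧) = a.choose n := by
  have h := Polynomial.coeff_one_add_X_pow R a n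
  rw [← Polynomial.coeff_coe] at h
  simpa using h

section BinomialMoments

variable {α β : Type*}

/-- `F` is the generating series of the binomial moments `∑ₓ C(S x, n) w x` of the statistic `S`
under the (possibly signed) weight `w`, each of which converges; formally, `F` is the expansion
of `∑ₓ w x (1 + X) ^ S x`. The `n`-th factorial moment is `n !` times the `n`-th coefficient. -/
def HasBinomialMomentSeries (w : α → ℝ) (S : α → ℕ) (F : ℝ⟦X⟧) : Prop :=
  ∀ n, HasSum (fun x ↦ ((S x).choose n : ℝ) * w x) (coeff n F)

namespace HasBinomialMomentSeries

variable {w : α → ℝ} {S : α → ℕ} {F : ℝ⟦X⟧}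

theorem hasSum_descFactorial (h : HasBinomialMomentSeries w S F) (n : ℕ) :
    HasSum (fun x ↦ ((S x).descFactorial n : ℝ) * w x) (n.factorial * coeff n F) := by
  simpa only [Nat.descFactorial_eq_factorial_mul_choose, Nat.cast_mul, mul_assoc]
    using (h n).mul_left (n.factorial : ℝ)

theorem mul {v : β → ℝ} {T : β → ℕ} {G : ℝ⟦X⟧} (h : HasBinomialMomentSeries w S F)
    (h' : HasBinomialMomentSeries v T G) :
    HasBinomialMomentSeries (fun p : α × β ↦ w p.1 * v p.2) (fun p ↦ S p.1 + T p.2) (F * G) := by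
  intro n
  rw [coeff_mul]
  have hterm (q : ℕ × ℕ) := (h q.1).mul (h' q.2)
    (summable_mul_of_summable_norm (h q.1).summable.norm (h' q.2).summable.norm)
  refine (hasSum_sum fun q _ ↦ hterm q).congr_fun ?_
  intro p
  rw [Nat.add_choose_eq, Nat.cast_sum, sum_mul]
  exact sum_congr rfl fun q _ ↦ by push_cast; ring

theorem pi {k : ℕ} {w : Fin k → α → ℝ} {S : Fin k → α → ℕ} {F : Fin k → ℝ⟦X⟧}
    (h : ∀ j, HasBinomialMomentSeries (w j) (S j) (F j)) :
    HasBinomialMomentSeries (fun f : Fin k → α ↦ ∏ j, w j (f j)) (fun f ↦ ∑ j, S j (f j))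
      (∏ j, F j) := by
  induction k with
  | zero =>
    intro n
    cases n <;> simp [coeff_one, hasSum_unique]
  | succ k ih =>
    intro n
    rw [← (Fin.consEquiv fun _ ↦ α).hasSum_iff, Fin.prod_univ_succ]
    simpa [Function.comp_def, Fin.consEquiv, Fin.prod_univ_succ, Fin.sum_univ_succ]
      using (h 0).mul (ih fun j ↦ h j.succ) n

theorem const_mul (h : HasBinomialMomentSeries w S F) (a : ℕ) :
    HasBinomialMomentSeries w (fun x ↦ a * S x) (F.subst ((1 + X) ^ a - 1 : ℝ⟦X⟧)) := by
  have hg : constantCoeff ((1 + X) ^ a - 1 : ℝ⟦X⟧) = 0 := by simp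
  have choose_mul (m n : ℕ) : ((a * m).choose n : ℝ) =
      ∑ d ∈ range (n + 1), (m.choose d : ℝ) * coeff n (((1 + X) ^ a - 1 : ℝ⟦X⟧) ^ d) := by
    calc ((a * m).choose n : ℝ)
        = coeff n (((1 + X) ^ a) ^ m : ℝ⟦X⟧) := by
          rw [← pow_mul, coeff_one_add_X_pow_eq_choose]
      _ = coeff n (((1 + X) ^ m : ℝ⟦X⟧).subst ((1 + X) ^ a - 1 : ℝ⟦X⟧)) := by
          have hg' := HasSubst.of_constantCoeff_zero' hg
          rw [← coe_substAlgHom hg']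
          simp [map_pow, map_add, map_one, substAlgHom_X hg']
      _ = _ := by
          simp only [coeff_subst_eq_sum_range hg, coeff_one_add_X_pow_eq_choose]
  intro n
  rw [coeff_subst_eq_sum_range hg]
  refine (hasSum_sum fun d _ ↦ (h d).mul_right _).congr_fun fun x ↦ ?_
  rw [choose_mul, sum_mul]
  exact sum_congr rfl fun d _ ↦ mul_right_comm _ _ _

theorem map (h : HasBinomialMomentSeries w S F) :
    HasBinomialMomentSeries (fun m ↦ ∑' x : S ⁻¹' {m}, w x) id F := by
  intro n
  refine ((h n).tsum_fiberwise S).congr_fun fun m ↦ ?_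
  rw [← tsum_mul_left]
  exact tsum_congr fun x ↦ by rw [id, x.2]

end HasBinomialMomentSeries

end BinomialMoments

section Poisson

theorem hasBinomialMomentSeries_poisson (lam : ℝ) :
    HasBinomialMomentSeries (fun n ↦ Real.exp (-lam) * (lam ^ n / n.factorial)) id
      (rescale lam (exp ℝ)) := by
  intro p
  have hexp : HasSum (fun n : ℕ ↦ lam ^ n / n.factorial) (Real.exp lam) := by
    simpa only [Real.exp_eq_exp_ℝ] using NormedSpace.expSeries_div_hasSum_exp lam
  have hshift := hexp.mul_left (Real.exp (-lam) * (lam ^ p / p.factorial))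
  rw [mul_right_comm, ← Real.exp_add, neg_add_cancel, Real.exp_zero, one_mul] at hshift
  have hcoeff : coeff p (rescale lam (exp ℝ)) = lam ^ p / p.factorial := by
    simp [div_eq_mul_inv]
  rw [hcoeff, ← (add_left_injective p).hasSum_iff]
  · refine hshift.congr_fun fun n ↦ ?_
    simp only [Function.comp_apply, id, add_comm n p, Nat.cast_add_choose, pow_add]
    field_simp
  · intro n hn
    have hnp : n < p := by
      by_contra! hpn
      exact hn ⟨n - p, Nat.sub_add_cancel hpn⟩
    simp [Nat.choose_eq_zero_of_lt hnp]

/-- The exponent `∑ⱼ ((1 + X) ^ j - 1)`, over `1 ≤ j ≤ k`, of the factorial moment generating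
function of the Poisson distribution of order `k` with `λ = 1`. -/
noncomputable def factorialCumulantSeries (k : ℕ) : ℝ⟦X⟧ :=
  ∑ j : Fin k, ((1 + X) ^ (j.1 + 1) - 1)

theorem constantCoeff_factorialCumulantSeries (k : ℕ) :
    constantCoeff (factorialCumulantSeries k) = 0 := by
  simp [factorialCumulantSeries]

theorem coeff_succ_factorialCumulantSeries (k n : ℕ) :
    coeff (n + 1) (factorialCumulantSeries k) = kappa k (n + 1) := by
  induction k with
  | zero => simp [factorialCumulantSeries, kappa, Nat.choose_eq_zero_of_lt]
  | succ k ih =>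
    have pascal : kappa (k + 1) (n + 1) = (k + 1).choose (n + 1) + kappa k (n + 1) := by
      simp only [kappa, Nat.choose_succ_succ' (k + 1), Nat.cast_add]
    rw [pascal, ← ih]
    simp only [factorialCumulantSeries, Fin.sum_univ_castSucc, Fin.val_castSucc, Fin.val_last,
      map_add, map_sub, coeff_one_add_X_pow_eq_choose, coeff_one, Nat.add_one_ne_zero, if_false,
      sub_zero, add_comm]

theorem tsum_preimage_eq_sum_orderkTuples (k m : ℕ) (g : (Fin k → ℕ) → ℝ) :
    ∑' f : (fun f : Fin k → ℕ ↦ ∑ j : Fin k, (j.1 + 1) * f j) ⁻¹' {m}, g f =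
      ∑ f ∈ orderkTuples k m, g fun j ↦ f j := by
  let val : (Fin k → Fin (m + 1)) ↪ (Fin k → ℕ) := ⟨fun f j ↦ f j, fun f f' h ↦ by
    ext j; exact congrFun h j⟩
  have hfiber : (fun f : Fin k → ℕ ↦ ∑ j : Fin k, (j.1 + 1) * f j) ⁻¹' {m} =
      ((orderkTuples k m).map val : Set (Fin k → ℕ)) := by
    ext f
    simp only [Set.mem_preimage, Set.mem_singleton_iff, coe_map, Set.mem_image, mem_coe,
      orderkTuples, mem_filter, mem_univ, true_and]
    refine ⟨fun hf ↦ ?_, by rintro ⟨f, hf, rfl⟩; exact hf⟩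
    have hle (j : Fin k) : f j ≤ m := calc
      f j ≤ (j.1 + 1) * f j := Nat.le_mul_of_pos_left _ j.1.succ_pos
      _ ≤ ∑ j : Fin k, (j.1 + 1) * f j :=
        single_le_sum (f := fun j : Fin k ↦ (j.1 + 1) * f j) (fun _ _ ↦ Nat.zero_le _) (mem_univ j)
      _ = m := hf
    exact ⟨fun j ↦ ⟨f j, Nat.lt_succ_of_le (hle j)⟩, hf, rfl⟩
  rw [hfiber, Finset.tsum_subtype', sum_map]
  rfl

theorem poissonOrderK_eq_tsum (k : ℕ) (lam : ℝ) (m : ℕ) :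
    poissonOrderK k lam m =
      ∑' f : (fun f : Fin k → ℕ ↦ ∑ j : Fin k, (j.1 + 1) * f j) ⁻¹' {m},
        ∏ j, Real.exp (-lam) * (lam ^ f.1 j / (f.1 j).factorial) := by
  rw [tsum_preimage_eq_sum_orderkTuples k m
    fun f ↦ ∏ j, Real.exp (-lam) * (lam ^ f j / (f j).factorial)]
  simp only [poissonOrderK, prod_mul_distrib, prod_const, card_univ, Fintype.card_fin,
    ← mul_sum, ← Real.exp_nat_mul, mul_neg]

theorem exp_subst_smul_factorialCumulantSeries (k : ℕ) (lam : ℝ) :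
    (exp ℝ).subst (lam • factorialCumulantSeries k) =
      ∏ j : Fin k, (rescale lam (exp ℝ)).subst ((1 + X) ^ (j.1 + 1) - 1 : ℝ⟦X⟧) := by
  rw [factorialCumulantSeries, smul_sum, exp_subst_sum _ (by simp)]
  exact prod_congr rfl fun j _ ↦ (rescale_subst (by simp) lam (exp ℝ)).symm

theorem hasBinomialMomentSeries_poissonOrderK (k : ℕ) (lam : ℝ) :
    HasBinomialMomentSeries (poissonOrderK k lam) id
      ((exp ℝ).subst (lam • factorialCumulantSeries k)) := by
  rw [funext (poissonOrderK_eq_tsum k lam), exp_subst_smul_factorialCumulantSeries]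
  exact (HasBinomialMomentSeries.pi fun j : Fin k ↦
    (hasBinomialMomentSeries_poisson lam).const_mul (j.1 + 1)).map

end Poisson

theorem poissonOrderK_fourthFactorialMoment_general (k : ℕ) (lam : ℝ) :
    HasSum (fun m : ℕ => (m.descFactorial 4 : ℝ) * poissonOrderK k lam m)
      (kappa k 1 ^ 4 * lam ^ 4 + 12 * kappa k 1 ^ 2 * kappa k 2 * lam ^ 3
        + (12 * kappa k 2 ^ 2 + 24 * kappa k 1 * kappa k 3) * lam ^ 2
        + 24 * kappa k 4 * lam) := by
  have hcumulant (n : ℕ) : coeff (n + 1) (lam • factorialCumulantSeries k) =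
      lam * kappa k (n + 1) := by
    rw [coeff_smul, coeff_succ_factorialCumulantSeries, smul_eq_mul]
  have hvalue := factorial_four_mul_coeff_four_exp_subst (f := lam • factorialCumulantSeries k)
    (by simp [constantCoeff_factorialCumulantSeries])
  rw [hcumulant 0, hcumulant 1, hcumulant 2, hcumulant 3] at hvalue
  have hmoment := (hasBinomialMomentSeries_poissonOrderK k lam).hasSum_descFactorial 4
  rw [hvalue] at hmoment
  convert hmoment using 1
  · rfl
  · ring

/-- The fourth factorial moment of the Poisson distribution of order `k` is
`M_{(4)}(k,λ) = κ₁⁴λ⁴ + 12κ₁²κ₂λ³ + (12κ₂² + 24κ₁κ₃)λ² + 24κ₄λ`. -/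
theorem poissonOrderK_fourthFactorialMoment (k : ℕ) (hk : 1 ≤ k) (lam : ℝ) (hlam : 0 < lam) :
    HasSum (fun m : ℕ => (m.descFactorial 4 : ℝ) * poissonOrderK k lam m)
      (kappa k 1 ^ 4 * lam ^ 4 + 12 * kappa k 1 ^ 2 * kappa k 2 * lam ^ 3
        + (12 * kappa k 2 ^ 2 + 24 * kappa k 1 * kappa k 3) * lam ^ 2
        + 24 * kappa k 4 * lam) :=
  poissonOrderK_fourthFactorialMoment_general k lam
end

section
/- For every integer k ≥ 1 and every real λ > 0, the sixth factorial moment of the Poisson distribution of order k is M_{(6)}(k,λ) = κ₁⁶ λ⁶ + 30 κ₁⁴ κ₂ λ⁵ + (180 κ₁² κ₂² + 120 κ₁³ κ₃) λ⁴ + (360 κ₁² κ₄ + 120 κ₂³ + 720 κ₁ κ₂ κ₃) λ³ + (720 κ₁ κ₅ + 720 κ₂ κ₄ + 360 κ₃²) λ² + 720 κ₆ λ, where κ_j = C(k+1, j+1). -/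
open scoped BigOperators

open Finset
open scoped Matrix Nat

/-!
If `N₁, …, N_k` are independent Poisson variables with rate `λ`, then `X = N₁ + 2 N₂ + ⋯ + k N_k`
has the Poisson distribution of order `k`. Mecke's identity `E[N_j h(N)] = λ E[h(N + e_j)]`, applied
to `h(N) = j g(X)` and summed over `j`, gives `E[X g(X)] = λ ∑ j, j E[g(X + j)]`. For
`g(X) = (X - 1) ⋯ (X - n)`, Vandermonde's identity turns this into the recursion of the complete
Bell polynomials, so the `n`-th factorial moment is `Bₙ(x₁, …, xₙ)` with
`x_l = λ ∑ j, j (j - 1) ⋯ (j - l + 1)`. The hockey-stick identity evaluates `x_l` as `λ l! κ_l`,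
and the theorem is the case of `B₆`.
-/

section CompleteBell

variable {R : Type*} [CommSemiring R]

/-- The complete exponential Bell polynomial `Bₙ(x₁, …, xₙ)`, that is, `n!` times the coefficient
of `tⁿ` in `exp (∑_{l ≥ 1} x_l t^l / l!)`, defined by its standard recursion.
The value `x 0` does not enter. -/
def completeBell (x : ℕ → R) : ℕ → R
  | 0 => 1
  | n + 1 => ∑ i : Fin (n + 1), n.choose i * completeBell x i * x (n - i + 1)

theorem completeBell_zero (x : ℕ → R) : completeBell x 0 = 1 := by
  rw [completeBell]

theorem completeBell_succ (x : ℕ → R) (n : ℕ) :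
    completeBell x (n + 1) =
      ∑ p ∈ antidiagonal n, n.choose p.1 * completeBell x p.1 * x (p.2 + 1) := by
  rw [completeBell, Nat.sum_antidiagonal_eq_sum_range_succ_mk,
    Fin.sum_univ_eq_sum_range fun i ↦ n.choose i * completeBell x i * x (n - i + 1)]

theorem completeBell_congr {x y : ℕ → R} (h : ∀ l, x (l + 1) = y (l + 1)) (n : ℕ) :
    completeBell x n = completeBell y n := by
  induction n using Nat.strong_induction_on with
  | _ n ih =>
    cases n with
    | zero => simp only [completeBell_zero]
    | succ n =>
      simp only [completeBell_succ, h]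
      refine sum_congr rfl fun p hp ↦ ?_
      rw [ih p.1 (Nat.lt_succ_of_le (HasAntidiagonal.antidiagonal.fst_le hp))]

theorem completeBell_six (x : ℕ → R) :
    completeBell x 6 = x 1 ^ 6 + 15 * x 1 ^ 4 * x 2 + 45 * x 1 ^ 2 * x 2 ^ 2 + 20 * x 1 ^ 3 * x 3
      + 15 * x 1 ^ 2 * x 4 + 15 * x 2 ^ 3 + 60 * x 1 * x 2 * x 3
      + 6 * x 1 * x 5 + 15 * x 2 * x 4 + 10 * x 3 ^ 2 + x 6 := by
  simp only [completeBell_succ, completeBell_zero, Nat.sum_antidiagonal_eq_sum_range_succ_mk,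
    sum_range_succ, sum_range_zero, Nat.choose]
  push_cast
  ring

end CompleteBell

section DescFactorial

theorem descFactorial_add_eq_sum_antidiagonal (s t n : ℕ) :
    (s + t).descFactorial n =
      ∑ p ∈ antidiagonal n, n.choose p.1 * (s.descFactorial p.1 * t.descFactorial p.2) := by
  have h := Ring.descPochhammer_smeval_add n (Commute.all (s : ℤ) t)
  rw [← Nat.cast_add] at h
  simp only [Polynomial.descPochhammer_smeval_eq_descFactorial] at h
  exact_mod_cast h

theorem mul_descFactorial_add_sub_one (s t n : ℕ) :
    s * (t + s - 1).descFactorial n =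
      ∑ p ∈ antidiagonal n, n.choose p.1 * (t.descFactorial p.1 * s.descFactorial (p.2 + 1)) := by
  cases s with
  | zero => simp
  | succ s =>
    simp only [← add_assoc, Nat.add_sub_cancel, descFactorial_add_eq_sum_antidiagonal, mul_sum,
      Nat.succ_descFactorial_succ]
    exact sum_congr rfl fun p _ ↦ by ring

theorem mul_descFactorial_sub_one (t n : ℕ) :
    t * (t - 1).descFactorial n = t.descFactorial (n + 1) := by
  cases t with
  | zero => simp
  | succ t => rw [Nat.add_sub_cancel, Nat.succ_descFactorial_succ]

end DescFactorial

theorem hasSum_fin_prod {β : Type*} {k : ℕ} {f : Fin k → β → ℝ} {a : Fin k → ℝ}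
    (hf : ∀ j, HasSum (f j) (a j)) :
    HasSum (fun x : Fin k → β ↦ ∏ j, f j (x j)) (∏ j, a j) := by
  induction k with
  | zero => simp
  | succ k ih =>
    have hzero := hf 0
    have hsucc := ih fun j ↦ hf j.succ
    have hsummable := summable_mul_of_summable_norm hzero.summable.norm hsucc.summable.norm
    rw [← (Fin.consEquiv fun _ ↦ β).hasSum_iff, Fin.prod_univ_succ]
    refine (hzero.mul hsucc hsummable).congr_fun fun x ↦ ?_
    simp [Fin.prod_univ_succ, Fin.consEquiv]

theorem hasSum_fintype_prod {ι β : Type*} [Fintype ι] {f : ι → β → ℝ} {a : ι → ℝ}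
    (hf : ∀ j, HasSum (f j) (a j)) :
    HasSum (fun x : ι → β ↦ ∏ j, f j (x j)) (∏ j, a j) := by
  let e := (Fintype.equivFin ι).symm
  rw [← (e.arrowCongr (Equiv.refl β)).hasSum_iff, ← e.prod_comp]
  simpa [Function.comp_def, ← e.prod_comp] using hasSum_fin_prod fun j ↦ hf (e j)

section PoissonProduct

variable {ι : Type*} [Fintype ι]

/-- The joint mass function at `x` of independent Poisson variables with rates `a j`; as a signed
weight it makes sense for arbitrary real rates. -/
noncomputable def poissonProdMass (a : ι → ℝ) (x : ι → ℕ) : ℝ :=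
  ∏ j, Real.exp (-a j) * (a j ^ x j / (x j)!)

theorem hasSum_poissonProdMass (a : ι → ℝ) : HasSum (poissonProdMass a) 1 := by
  have hone (j : ι) : HasSum (fun n : ℕ ↦ Real.exp (-a j) * (a j ^ n / n !)) 1 := by
    have hexp := NormedSpace.expSeries_div_hasSum_exp (a j)
    rw [← Real.exp_eq_exp_ℝ] at hexp
    simpa [← Real.exp_add] using hexp.mul_left (Real.exp (-a j))
  have hprod := hasSum_fintype_prod hone
  rwa [prod_const_one] at hprod

theorem poissonProdMass_add_single [DecidableEq ι] (a : ι → ℝ) (x : ι → ℕ) (j : ι) :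
    (x j + 1) * poissonProdMass a (x + Pi.single j 1) = a j * poissonProdMass a x := by
  have hother : ∏ i ∈ univ.erase j, Real.exp (-a i) *
      (a i ^ (x + Pi.single j 1 : ι → ℕ) i / ((x + Pi.single j 1 : ι → ℕ) i)!) =
      ∏ i ∈ univ.erase j, Real.exp (-a i) * (a i ^ x i / (x i)!) :=
    prod_congr rfl fun i hi ↦ by simp [ne_of_mem_erase hi]
  rw [poissonProdMass, poissonProdMass, ← mul_prod_erase univ _ (mem_univ j), hother,
    ← mul_prod_erase univ _ (mem_univ j)]
  simp only [Pi.add_apply, Pi.single_eq_same, Nat.factorial_succ, pow_succ]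
  push_cast
  field_simp

theorem hasSum_apply_mul_poissonProdMass [DecidableEq ι] {a : ι → ℝ} {j : ι}
    {h : (ι → ℕ) → ℝ} {S : ℝ}
    (hS : HasSum (fun x ↦ h (x + Pi.single j 1) * poissonProdMass a x) S) :
    HasSum (fun x ↦ x j * h x * poissonProdMass a x) (a j * S) := by
  rw [← (add_left_injective (Pi.single j 1)).hasSum_iff]
  · refine (hS.mul_left (a j)).congr_fun fun x ↦ ?_
    simp only [Function.comp_apply, Pi.add_apply, Pi.single_eq_same]
    push_cast
    linear_combination h (x + Pi.single j 1) * poissonProdMass_add_single a x j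
  · intro x hx
    have hxj : x j = 0 := by
      by_contra hne
      have hle : Pi.single j 1 ≤ x :=
        update_le_iff.2 ⟨Nat.one_le_iff_ne_zero.2 hne, fun _ _ ↦ Nat.zero_le _⟩
      exact hx ⟨x - Pi.single j 1, tsub_add_cancel_of_le hle⟩
    simp [hxj]

theorem hasSum_dotProduct_mul_poissonProdMass {a : ι → ℝ} {s : ι → ℕ} {g : ℕ → ℝ} {S : ι → ℝ}
    (hS : ∀ j, HasSum (fun x ↦ s j * g (s ⬝ᵥ x + s j) * poissonProdMass a x) (S j)) :
    HasSum (fun x ↦ (s ⬝ᵥ x : ℕ) * g (s ⬝ᵥ x) * poissonProdMass a x) (∑ j, a j * S j) := by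
  classical
  have hj (j : ι) : HasSum (fun x ↦ x j * (s j * g (s ⬝ᵥ x)) * poissonProdMass a x)
      (a j * S j) := by
    refine hasSum_apply_mul_poissonProdMass (h := fun x ↦ s j * g (s ⬝ᵥ x)) ?_
    simpa only [dotProduct_add, dotProduct_single_one] using hS j
  refine (hasSum_sum fun j (_ : j ∈ univ) ↦ hj j).congr_fun fun x ↦ ?_
  simp only [dotProduct, Nat.cast_sum, Nat.cast_mul, sum_mul]
  exact sum_congr rfl fun j _ ↦ by ring

theorem hasSum_descFactorial_succ_dotProduct_mul_poissonProdMass {a : ι → ℝ} {s : ι → ℕ} {n : ℕ}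
    {M : ℕ → ℝ} (hM : ∀ i ≤ n,
      HasSum (fun x ↦ ((s ⬝ᵥ x).descFactorial i : ℝ) * poissonProdMass a x) (M i)) :
    HasSum (fun x ↦ ((s ⬝ᵥ x).descFactorial (n + 1) : ℝ) * poissonProdMass a x)
      (∑ p ∈ antidiagonal n, n.choose p.1 * M p.1 * ∑ j, a j * (s j).descFactorial (p.2 + 1)) := by
  have hshift (j : ι) :
      HasSum (fun x ↦ s j * ((s ⬝ᵥ x + s j - 1).descFactorial n : ℝ) * poissonProdMass a x)
        (∑ p ∈ antidiagonal n, n.choose p.1 * (s j).descFactorial (p.2 + 1) * M p.1) := by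
    refine (hasSum_sum fun p hp ↦ (hM p.1 (HasAntidiagonal.antidiagonal.fst_le hp)).mul_left
      (n.choose p.1 * (s j).descFactorial (p.2 + 1) : ℝ)).congr_fun fun x ↦ ?_
    rw [← Nat.cast_mul, mul_descFactorial_add_sub_one, Nat.cast_sum, sum_mul]
    exact sum_congr rfl fun p _ ↦ by push_cast; ring
  have hstein := hasSum_dotProduct_mul_poissonProdMass
    (g := fun t ↦ ((t - 1).descFactorial n : ℝ)) hshift
  convert hstein using 1
  · simp only [← mul_descFactorial_sub_one, Nat.cast_mul]
  · simp only [mul_sum]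
    rw [sum_comm]
    exact sum_congr rfl fun j _ ↦ sum_congr rfl fun p _ ↦ by ring

theorem hasSum_descFactorial_dotProduct_mul_poissonProdMass (a : ι → ℝ) (s : ι → ℕ) (n : ℕ) :
    HasSum (fun x ↦ ((s ⬝ᵥ x).descFactorial n : ℝ) * poissonProdMass a x)
      (completeBell (fun l ↦ ∑ j, a j * (s j).descFactorial l) n) := by
  induction n using Nat.strong_induction_on with
  | _ n ih =>
    cases n with
    | zero => simpa [completeBell_zero] using hasSum_poissonProdMass a
    | succ n =>
      rw [completeBell_succ]
      exact hasSum_descFactorial_succ_dotProduct_mul_poissonProdMass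
        fun i hi ↦ ih i (Nat.lt_succ_of_le hi)

end PoissonProduct

section OrderK

/-- The jump sizes `1, …, k` in the description of the Poisson distribution of order `k` as the law
of `N₁ + 2 N₂ + ⋯ + k N_k = jumpSize k ⬝ᵥ N`, with independent Poisson variables `N_j`;
the index `j : Fin k` stands for `j + 1`. -/
def jumpSize (k : ℕ) (j : Fin k) : ℕ := j + 1

theorem sum_descFactorial_jumpSize (k l : ℕ) :
    ∑ j, (jumpSize k j).descFactorial (l + 1) = (l + 1)! * (k + 1).choose (l + 2) := by
  induction k with
  | zero => simp [Nat.choose_eq_zero_of_lt]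
  | succ k ih =>
    simp only [jumpSize] at ih ⊢
    rw [Fin.sum_univ_castSucc]
    simp only [Fin.val_castSucc, Fin.val_last]
    rw [ih, Nat.descFactorial_eq_factorial_mul_choose, Nat.choose_succ_succ' (k + 1) (l + 1)]
    ring

theorem le_jumpSize_dotProduct {k : ℕ} (x : Fin k → ℕ) (j : Fin k) : x j ≤ jumpSize k ⬝ᵥ x :=
  calc x j ≤ jumpSize k j * x j := Nat.le_mul_of_pos_left _ j.1.succ_pos
    _ ≤ jumpSize k ⬝ᵥ x :=
      single_le_sum (f := fun i ↦ jumpSize k i * x i) (fun _ _ ↦ Nat.zero_le _) (mem_univ j)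

theorem sum_orderkTuples {M : Type*} [AddCommMonoid M] [TopologicalSpace M]
    (k m : ℕ) (w : (Fin k → ℕ) → M) :
    ∑ f ∈ orderkTuples k m, w (fun j ↦ f j) = ∑' x : (jumpSize k ⬝ᵥ ·) ⁻¹' {m}, w x := by
  have hinj : Function.Injective fun (f : Fin k → Fin (m + 1)) j ↦ (f j : ℕ) :=
    Fin.val_injective.comp_left
  have hfiber : (jumpSize k ⬝ᵥ ·) ⁻¹' {m} = ↑((orderkTuples k m).map ⟨_, hinj⟩) := by
    ext x
    rw [mem_coe, mem_map]
    constructor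
    · rintro rfl
      exact ⟨fun j ↦ ⟨x j, Nat.lt_succ_of_le (le_jumpSize_dotProduct x j)⟩,
        mem_filter.2 ⟨mem_univ _, rfl⟩, rfl⟩
    · rintro ⟨f, hf, rfl⟩
      exact (mem_filter.1 hf).2
  rw [hfiber, tsum_subtype', sum_map]
  rfl

theorem poissonOrderK_eq_tsum_s11 (k : ℕ) (lam : ℝ) (m : ℕ) :
    poissonOrderK k lam m =
      ∑' x : (jumpSize k ⬝ᵥ ·) ⁻¹' {m}, poissonProdMass (fun _ ↦ lam) x.1 := by
  rw [← sum_orderkTuples k m (poissonProdMass fun _ ↦ lam), poissonOrderK, mul_sum]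
  refine sum_congr rfl fun f _ ↦ ?_
  simp [poissonProdMass, prod_mul_distrib, ← Real.exp_nat_mul]

theorem hasSum_mul_poissonOrderK_s11 {k : ℕ} {lam : ℝ} {g : ℕ → ℝ} {S : ℝ}
    (hS : HasSum (fun x ↦ g (jumpSize k ⬝ᵥ x) * poissonProdMass (fun _ ↦ lam) x) S) :
    HasSum (fun m ↦ g m * poissonOrderK k lam m) S := by
  refine (hS.tsum_fiberwise (jumpSize k ⬝ᵥ ·)).congr_fun fun m ↦ ?_
  rw [poissonOrderK_eq_tsum_s11, ← tsum_mul_left]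
  refine tsum_congr fun x ↦ ?_
  have hx : jumpSize k ⬝ᵥ x.1 = m := x.2
  rw [hx]

theorem hasSum_descFactorial_mul_poissonOrderK_s11 (k : ℕ) (lam : ℝ) (n : ℕ) :
    HasSum (fun m ↦ (m.descFactorial n : ℝ) * poissonOrderK k lam m)
      (completeBell (fun l ↦ l ! * kappa k l * lam) n) := by
  have hcumulant (l : ℕ) : (l + 1)! * kappa k (l + 1) * lam =
      ∑ j, lam * (jumpSize k j).descFactorial (l + 1) := by
    rw [← mul_sum, ← Nat.cast_sum, sum_descFactorial_jumpSize, kappa]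
    push_cast
    ring
  rw [completeBell_congr (y := fun l ↦ ∑ j, lam * ((jumpSize k j).descFactorial l : ℝ)) hcumulant]
  exact hasSum_mul_poissonOrderK_s11 (g := fun m ↦ (m.descFactorial n : ℝ))
    (hasSum_descFactorial_dotProduct_mul_poissonProdMass (fun _ ↦ lam) (jumpSize k) n)

theorem poissonOrderK_sixthFactorialMoment_general (k : ℕ) (lam : ℝ) :
    HasSum (fun m : ℕ => (m.descFactorial 6 : ℝ) * poissonOrderK k lam m)
      (kappa k 1 ^ 6 * lam ^ 6 + 30 * kappa k 1 ^ 4 * kappa k 2 * lam ^ 5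
        + (180 * kappa k 1 ^ 2 * kappa k 2 ^ 2 + 120 * kappa k 1 ^ 3 * kappa k 3) * lam ^ 4
        + (360 * kappa k 1 ^ 2 * kappa k 4 + 120 * kappa k 2 ^ 3
            + 720 * kappa k 1 * kappa k 2 * kappa k 3) * lam ^ 3
        + (720 * kappa k 1 * kappa k 5 + 720 * kappa k 2 * kappa k 4
            + 360 * kappa k 3 ^ 2) * lam ^ 2
        + 720 * kappa k 6 * lam) := by
  convert hasSum_descFactorial_mul_poissonOrderK_s11 k lam 6 using 1
  rw [completeBell_six]
  simp only [Nat.factorial]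
  push_cast
  ring

end OrderK

/-- The sixth factorial moment of the Poisson distribution of order `k` is
`M_{(6)}(k,λ) = κ₁⁶λ⁶ + 30κ₁⁴κ₂λ⁵ + (180κ₁²κ₂² + 120κ₁³κ₃)λ⁴
  + (360κ₁²κ₄ + 120κ₂³ + 720κ₁κ₂κ₃)λ³ + (720κ₁κ₅ + 720κ₂κ₄ + 360κ₃²)λ² + 720κ₆λ`. -/
theorem poissonOrderK_sixthFactorialMoment (k : ℕ) (hk : 1 ≤ k) (lam : ℝ) (hlam : 0 < lam) :
    HasSum (fun m : ℕ => (m.descFactorial 6 : ℝ) * poissonOrderK k lam m)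
      (kappa k 1 ^ 6 * lam ^ 6 + 30 * kappa k 1 ^ 4 * kappa k 2 * lam ^ 5
        + (180 * kappa k 1 ^ 2 * kappa k 2 ^ 2 + 120 * kappa k 1 ^ 3 * kappa k 3) * lam ^ 4
        + (360 * kappa k 1 ^ 2 * kappa k 4 + 120 * kappa k 2 ^ 3
            + 720 * kappa k 1 * kappa k 2 * kappa k 3) * lam ^ 3
        + (720 * kappa k 1 * kappa k 5 + 720 * kappa k 2 * kappa k 4
            + 360 * kappa k 3 ^ 2) * lam ^ 2
        + 720 * kappa k 6 * lam) :=
  poissonOrderK_sixthFactorialMoment_general k lam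
end

section
/- For all integers k ≥ 2 and n ≥ 2, the coefficient of λ^{n−1} in the n-th factorial moment of the Poisson distribution of order k is c_{n−1}(n,k) = (n(n−1)/3) · (k(k+1)/2)^{n−1} · (k−1). -/
open scoped BigOperators

/-- The finite set of `k`-tuples `(n₁, …, n_k)` of nonnegative integers
(encoded as functions `Fin k → Fin (n+1)`) satisfying the two constraints
`n₁ + 2 n₂ + ⋯ + k n_k = n` and `n₁ + n₂ + ⋯ + n_k = r`. -/
def coeffTuples (k n r : ℕ) : Finset (Fin k → Fin (n + 1)) :=
  Finset.univ.filter
    (fun f => (∑ j : Fin k, (j.1 + 1) * (f j).1 = n) ∧ (∑ j : Fin k, (f j).1 = r))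

/-- The coefficient of `λ^r` in the `n`-th factorial moment of the Poisson distribution
of order `k`:  `c_r(n,k) = n! ∑ ∏_{j=1}^k κ_j^{n_j}/n_j!`, where `κ_j = C(k+1, j+1)`
and the sum ranges over tuples with `n₁+2n₂+⋯+k n_k = n` and `n₁+⋯+n_k = r`. -/
noncomputable def facMomCoeff (n k r : ℕ) : ℝ :=
  (n.factorial : ℝ) *
    ∑ f ∈ coeffTuples k n r, ∏ j : Fin k,
      ((k + 1).choose (j.1 + 2) : ℝ) ^ (f j).1 / (f j).1.factorial

/-!
Subtracting `∑ n_j = n - 1` from `∑ j n_j = n` leaves `∑ (j - 1) n_j = 1`, which forces `n₂ = 1` and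
`n_j = 0` for `j ≥ 3`. So the only tuple is `(n - 2, 1, 0, …, 0)`, and the coefficient is
`n! / (n - 2)! · κ₁ ^ (n - 2) κ₂` with `κ₁ = k (k + 1) / 2` and `κ₂ = κ₁ (k - 1) / 3`.
-/

theorem cast_choose_succ {K : Type*} [DivisionRing K] [CharZero K] (n r : ℕ) :
    (n.choose (r + 1) : K) = n.choose r * (n - r) / (r + 1) := by
  rw [eq_div_iff (Nat.cast_add_one_ne_zero r)]
  rcases le_or_gt r n with hrn | hnr
  · rw [← Nat.cast_sub hrn]
    exact_mod_cast Nat.choose_succ_right_eq n r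
  · simp [Nat.choose_eq_zero_of_lt hnr, Nat.choose_eq_zero_of_lt (hnr.trans r.lt_succ_self)]

theorem sum_val_mul_eq_one_iff {m : ℕ} {a : Fin (m + 2) → ℕ} :
    ∑ j, j.val * a j = 1 ↔ a 1 = 1 ∧ ∀ i : Fin m, a i.succ.succ = 0 := by
  simp only [Fin.sum_univ_succ, Fin.val_zero, Fin.val_succ, Fin.succ_zero_eq_one, zero_mul,
    zero_add, one_mul]
  constructor
  · intro weighted_sum_eq_one
    have two_mul_tail_le :
        2 * ∑ i : Fin m, a i.succ.succ ≤ ∑ i : Fin m, (i.val + 1 + 1) * a i.succ.succ := by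
      rw [Finset.mul_sum]
      gcongr
      omega
    have tail_eq_zero : ∀ i : Fin m, a i.succ.succ = 0 := by
      simpa using (by omega : ∑ i : Fin m, a i.succ.succ = 0)
    exact ⟨by simpa [tail_eq_zero] using weighted_sum_eq_one, tail_eq_zero⟩
  · rintro ⟨a_one, tail_eq_zero⟩
    simp [a_one, tail_eq_zero]

theorem mem_coeffTuples_iff_sum_val_mul_add {k n r : ℕ} {f : Fin k → Fin (n + 1)} :
    f ∈ coeffTuples k n r ↔ ∑ j, j.val * (f j).val + r = n ∧ ∑ j, (f j).val = r := by
  simp only [coeffTuples, Finset.mem_filter_univ, add_mul, one_mul, Finset.sum_add_distrib]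
  exact and_congr_left fun sum_eq ↦ by rw [sum_eq]

section OneDouble

variable (m p : ℕ)

/-- The tuple `(p, 1, 0, …, 0)`, the multiplicities of the partition of `p + 2` into `p` ones and
a single two. Its entries lie in `Fin (p + 2 + 1)` to match `coeffTuples`. -/
def oneDoubleTuple : Fin (m + 2) → Fin (p + 2 + 1) :=
  Fin.cons ⟨p, by omega⟩ (Fin.cons 1 0)

theorem eq_oneDoubleTuple_iff {f : Fin (m + 2) → Fin (p + 2 + 1)} :
    f = oneDoubleTuple m p ↔
      (f 0).val = p ∧ (f 1).val = 1 ∧ ∀ i : Fin m, (f i.succ.succ).val = 0 := by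
  simp only [funext_iff, Fin.forall_fin_succ, Fin.ext_iff]
  rfl

theorem coeffTuples_eq_singleton_oneDoubleTuple :
    coeffTuples (m + 2) (p + 2) (p + 1) = {oneDoubleTuple m p} := by
  ext f
  have excess_eq_one :
      ∑ j, j.val * (f j).val + (p + 1) = p + 2 ↔ ∑ j, j.val * (f j).val = 1 := by
    omega
  rw [mem_coeffTuples_iff_sum_val_mul_add, excess_eq_one, sum_val_mul_eq_one_iff,
    Finset.mem_singleton, eq_oneDoubleTuple_iff, and_comm (a := (f 0).val = p)]
  refine and_congr_right fun ⟨f_one, tail_eq_zero⟩ ↦ ?_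
  simp [Fin.sum_univ_succ, f_one, tail_eq_zero]

theorem sum_coeffTuples_prod_pow_div_factorial {K : Type*} [Semifield K] (x : Fin (m + 2) → K) :
    ∑ f ∈ coeffTuples (m + 2) (p + 2) (p + 1), ∏ j, x j ^ (f j).val / (f j).val.factorial =
      x 0 ^ p / p.factorial * x 1 := by
  rw [coeffTuples_eq_singleton_oneDoubleTuple, Finset.sum_singleton]
  simp [oneDoubleTuple, Fin.prod_univ_succ, div_mul_eq_mul_div]

theorem facMomCoeff_add_two :
    facMomCoeff (p + 2) (m + 2) (p + 1) =
      (p + 2).factorial / p.factorial * ((m + 3).choose 2 : ℝ) ^ p * (m + 3).choose 3 := by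
  rw [facMomCoeff, sum_coeffTuples_prod_pow_div_factorial m p fun j ↦
    ((m + 2 + 1).choose (j.val + 2) : ℝ)]
  simp only [Fin.val_zero, Fin.val_one, Nat.reduceAdd]
  ring

end OneDouble

/-- For `k ≥ 2` and `n ≥ 2`, the coefficient of `λ^{n−1}` in the `n`-th factorial
moment of the Poisson distribution of order `k` is
`(n(n−1)/3) (k(k+1)/2)^{n−1} (k−1)`. -/
theorem facMomCoeff_second (k n : ℕ) (hk : 2 ≤ k) (hn : 2 ≤ n) :
    facMomCoeff n k (n - 1)
      = (n : ℝ) * ((n : ℝ) - 1) / 3 * ((k : ℝ) * (k + 1) / 2) ^ (n - 1) * ((k : ℝ) - 1) := by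
  obtain ⟨m, rfl⟩ := Nat.exists_eq_add_of_le' hk
  obtain ⟨p, rfl⟩ := Nat.exists_eq_add_of_le' hn
  have choose_two : ((m + 3).choose 2 : ℝ) = (m + 2) * (m + 3) / 2 := by
    rw [Nat.cast_choose_two]
    push_cast
    ring
  have choose_three : ((m + 3).choose 3 : ℝ) = (m + 2) * (m + 3) / 2 * (m + 1) / 3 := by
    rw [cast_choose_succ, choose_two]
    push_cast
    ring
  have factorial_div : ((p + 2).factorial / p.factorial : ℝ) = (p + 2) * (p + 1) := by
    rw [div_eq_iff (by positivity), Nat.factorial_succ, Nat.factorial_succ]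
    push_cast
    ring
  rw [Nat.add_succ_sub_one, facMomCoeff_add_two, factorial_div, choose_two, choose_three]
  push_cast
  ring
end

section
/- For all integers k ≥ 3 and n ≥ 3, the coefficient of λ^{n−2} in the n-th factorial moment of the Poisson distribution of order k is c_{n−2}(n,k) = (1/6) · C(n,3) · (k(k+1)/2)^{n−2} · (k−1) · ((2n−3)k − 2n). -/
open scoped BigOperators

/-!
The binomial theorem gives `∑ i ∈ [1, k], ((1 + t) ^ i - 1) = ∑ j ∈ [1, k], κ_j t ^ j`, so the
factorial moments have exponential generating function `exp (λ ∑ κ_j t ^ j)`. Hence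
`c_r(n, k)` is `n! / r!` times the coefficient of `t ^ n` in `(∑ κ_j t ^ j) ^ r`. Every term of the
inner sum is divisible by `t`, so for `n = r + 2` only the coefficient of `t ^ 2` in the `r`-th
power of `κ_1 + κ_2 t + κ_3 t ^ 2 + ⋯` is needed, which is
`r κ_1 ^ (r - 1) κ_3 + C(r, 2) κ_1 ^ (r - 2) κ_2 ^ 2`.
-/

section PowerSeries

open PowerSeries

variable {R ι : Type*} [CommSemiring R]

lemma coeff_two_pow (r : ℕ) (φ : R⟦X⟧) :
    coeff 2 (φ ^ r) = r * coeff 0 φ ^ (r - 1) * coeff 2 φ +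
      r.choose 2 * coeff 0 φ ^ (r - 2) * coeff 1 φ ^ 2 := by
  induction r with
  | zero => simp [coeff_one]
  | succ r ih =>
    have hmul : coeff 2 (φ ^ r * φ) = coeff 0 φ ^ r * coeff 2 φ +
        coeff 1 (φ ^ r) * coeff 1 φ + coeff 2 (φ ^ r) * coeff 0 φ := by
      simp [coeff_mul, Finset.Nat.antidiagonal_succ, add_assoc]
    rw [pow_succ, hmul, ih, coeff_one_pow]
    rcases r with _ | _ | r
    · simp
    · simp only [zero_add, tsub_self, pow_zero, pow_one, Nat.reduceSubDiff, Nat.reduceAdd,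
        Nat.choose_self, Nat.choose_succ_self, Nat.cast_zero, Nat.cast_one, Nat.cast_ofNat]
      ring
    · simp only [Nat.choose_succ_succ' (r + 2) 1, Nat.choose_one_right, Nat.add_sub_cancel,
        Nat.reduceSubDiff, Nat.cast_add, Nat.cast_one, coeff_zero_eq_constantCoeff]
      ring

lemma coeff_two_pow_of_eq_mul (r : ℕ) {φ : R⟦X⟧} {a b c : R} (h₀ : coeff 0 φ = a)
    (h₁ : coeff 1 φ = a * b) (h₂ : coeff 2 φ = a * c) :
    coeff 2 (φ ^ r) = a ^ r * (r * c + r.choose 2 * b ^ 2) := by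
  rw [coeff_two_pow, h₀, h₁, h₂]
  rcases r with _ | _ | r
  · simp
  · simp
  · simp only [Nat.add_sub_cancel, Nat.reduceSubDiff]
    ring

lemma coeff_sum_C_mul_X_pow_pow [DecidableEq ι] (s : Finset ι) (a : ι → R) (d : ι → ℕ) (n r : ℕ) :
    coeff n ((∑ i ∈ s, C (a i) * X ^ d i) ^ r) =
      ∑ f ∈ s.piAntidiag r with ∑ i ∈ s, d i * f i = n,
        (Nat.multinomial s f : R) * ∏ i ∈ s, a i ^ f i := by
  have hterm (f : ι → ℕ) :
      (Nat.multinomial s f : R⟦X⟧) * ∏ i ∈ s, (C (a i) * X ^ d i) ^ f i =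
        C (Nat.multinomial s f * ∏ i ∈ s, a i ^ f i) * X ^ ∑ i ∈ s, d i * f i := by
    simp [mul_pow, Finset.prod_mul_distrib, Finset.prod_pow_eq_pow_sum, ← pow_mul, mul_assoc]
  simp only [Finset.sum_pow_eq_sum_piAntidiag, hterm, map_sum, coeff_C_mul, coeff_X_pow, mul_ite,
    mul_one, mul_zero, Finset.sum_filter, eq_comm]

end PowerSeries

lemma sum_coeffTuples_eq_sum_piAntidiag {M : Type*} [AddCommMonoid M] (k n r : ℕ)
    (F : (Fin k → ℕ) → M) :
    ∑ f ∈ coeffTuples k n r, F (fun j ↦ f j) =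
      ∑ f ∈ Finset.univ.piAntidiag r with ∑ j : Fin k, (j.1 + 1) * f j = n, F f := by
  refine Finset.sum_bij (fun f _ j ↦ f j) ?_ ?_ ?_ fun _ _ ↦ rfl
  · simp +contextual [coeffTuples]
  · intro f _ g _ hfg
    funext j
    exact Fin.ext (congrFun hfg j)
  · intro f hf
    simp only [Finset.mem_filter, Finset.mem_piAntidiag] at hf
    obtain ⟨⟨hr, -⟩, hn⟩ := hf
    have hle (j : Fin k) : f j ≤ n := calc
      f j ≤ (j.1 + 1) * f j := Nat.le_mul_of_pos_left _ j.1.succ_pos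
      _ ≤ n := hn ▸ Finset.single_le_sum (f := fun j : Fin k ↦ (j.1 + 1) * f j)
        (fun _ _ ↦ Nat.zero_le _) (Finset.mem_univ j)
    exact ⟨fun j ↦ ⟨f j, Nat.lt_succ_of_le (hle j)⟩, by simp [coeffTuples, hr, hn], rfl⟩

lemma prod_pow_div_factorial {ι K : Type*} [Field K] [CharZero K] (s : Finset ι) (a : ι → K)
    (f : ι → ℕ) :
    ∏ i ∈ s, a i ^ f i / (f i).factorial =
      (Nat.multinomial s f * ∏ i ∈ s, a i ^ f i) / (∑ i ∈ s, f i).factorial := by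
  have hprod : ∏ i ∈ s, ((f i).factorial : K) ≠ 0 :=
    Finset.prod_ne_zero_iff.mpr fun i _ ↦ Nat.cast_ne_zero.mpr (f i).factorial_ne_zero
  have hmultinomial : (Nat.multinomial s f : K) ≠ 0 :=
    Nat.cast_ne_zero.mpr (Nat.multinomial_pos s f).ne'
  rw [← Nat.multinomial_spec, Finset.prod_div_distrib]
  push_cast
  field_simp

lemma cast_choose_three {K : Type*} [Field K] [CharZero K] (n : ℕ) :
    (n.choose 3 : K) = n * (n - 1) * (n - 2) / 6 := by
  simp [Nat.cast_choose_eq_descPochhammer_div, descPochhammer_eval_eq_prod_range,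
    Finset.prod_range_succ, Nat.factorial]

lemma cast_choose_four {K : Type*} [Field K] [CharZero K] (n : ℕ) :
    (n.choose 4 : K) = n * (n - 1) * (n - 2) * (n - 3) / 24 := by
  simp [Nat.cast_choose_eq_descPochhammer_div, descPochhammer_eval_eq_prod_range,
    Finset.prod_range_succ, Nat.factorial]

section FactorialMoment

open PowerSeries

/-- The power series `κ_1 + κ_2 t + ⋯ + κ_k t ^ (k - 1)`, where `κ_j = C(k+1, j+1)`. The common
factor `t` of `∑ κ_j t ^ j` is removed; the coefficients vanish from `t ^ k` on because the binomial
coefficients do. -/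
noncomputable def kappaSeries (k : ℕ) : ℝ⟦X⟧ :=
  mk fun j ↦ ((k + 1).choose (j + 2) : ℝ)

lemma sum_choose_mul_X_pow_eq_X_mul_kappaSeries (k : ℕ) :
    ∑ j : Fin k, C ((k + 1).choose (j.1 + 2) : ℝ) * X ^ (j.1 + 1) = X * kappaSeries k := by
  ext (_ | m)
  · simp
  · have hvanish (hm : k ≤ m) : (k + 1).choose (m + 2) = 0 := Nat.choose_eq_zero_of_lt (by lia)
    simp only [map_sum, coeff_C_mul, coeff_X_pow, add_left_inj, coeff_succ_X_mul, kappaSeries,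
      coeff_mk]
    rw [Fin.sum_univ_eq_sum_range
      fun j ↦ ((k + 1).choose (j + 2) : ℝ) * if m = j then 1 else 0]
    simp +contextual [hvanish]

lemma facMomCoeff_add_eq_coeff_kappaSeries_pow (k r s : ℕ) :
    facMomCoeff (r + s) k r =
      ((r + s).factorial : ℝ) / r.factorial * coeff s (kappaSeries k ^ r) := by
  have hcoeff : coeff s (kappaSeries k ^ r) = coeff (r + s)
      ((∑ j : Fin k, C ((k + 1).choose (j.1 + 2) : ℝ) * X ^ (j.1 + 1)) ^ r) := by
    rw [sum_choose_mul_X_pow_eq_X_mul_kappaSeries, mul_pow, add_comm, coeff_X_pow_mul]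
  rw [hcoeff, coeff_sum_C_mul_X_pow_pow, facMomCoeff,
    sum_coeffTuples_eq_sum_piAntidiag k (r + s) r
      fun f ↦ ∏ j, ((k + 1).choose (j.1 + 2) : ℝ) ^ f j / (f j).factorial,
    div_mul_eq_mul_div, mul_div_assoc, Finset.sum_div]
  congr 1
  refine Finset.sum_congr rfl fun f hf ↦ ?_
  rw [prod_pow_div_factorial, (Finset.mem_piAntidiag.mp (Finset.mem_filter.mp hf).1).1]

lemma facMomCoeff_add_two_s14 (k r : ℕ) :
    facMomCoeff (r + 2) k r = (r + 2) * (r + 1) * ((k : ℝ) * (k + 1) / 2) ^ r *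
      (r * ((k - 1) * (k - 2) / 12) + r.choose 2 * ((k - 1) / 3) ^ 2) := by
  have hκ₁ : coeff 0 (kappaSeries k) = (k : ℝ) * (k + 1) / 2 := by
    simp [kappaSeries, Nat.cast_choose_two, mul_comm]
  have hκ₂ : coeff 1 (kappaSeries k) = (k : ℝ) * (k + 1) / 2 * ((k - 1) / 3) := by
    simp only [kappaSeries, coeff_mk, Nat.reduceAdd, cast_choose_three, Nat.cast_succ]
    ring
  have hκ₃ : coeff 2 (kappaSeries k) = (k : ℝ) * (k + 1) / 2 * ((k - 1) * (k - 2) / 12) := by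
    simp only [kappaSeries, coeff_mk, Nat.reduceAdd, cast_choose_four, Nat.cast_succ]
    ring
  have hfactorial : ((r + 2).factorial : ℝ) / r.factorial = (r + 2) * (r + 1) := by
    rw [div_eq_iff (by positivity)]
    push_cast [Nat.factorial_succ]
    ring
  rw [facMomCoeff_add_eq_coeff_kappaSeries_pow, hfactorial,
    coeff_two_pow_of_eq_mul r hκ₁ hκ₂ hκ₃, ← mul_assoc]

end FactorialMoment

theorem facMomCoeff_third_general (k n : ℕ) (hn : 2 ≤ n) :
    facMomCoeff n k (n - 2)
      = 1 / 6 * (n.choose 3 : ℝ) * ((k : ℝ) * (k + 1) / 2) ^ (n - 2) * ((k : ℝ) - 1)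
          * ((2 * (n : ℝ) - 3) * k - 2 * n) := by
  obtain ⟨r, rfl⟩ := Nat.exists_eq_add_of_le' hn
  rw [Nat.add_sub_cancel, facMomCoeff_add_two_s14, Nat.cast_choose_two, cast_choose_three]
  push_cast
  ring

/-- For `k ≥ 3` and `n ≥ 3`, the coefficient of `λ^{n−2}` in the `n`-th factorial
moment of the Poisson distribution of order `k` is
`(1/6) C(n,3) (k(k+1)/2)^{n−2} (k−1) ((2n−3)k − 2n)`. -/
theorem facMomCoeff_third (k n : ℕ) (hk : 3 ≤ k) (hn : 3 ≤ n) :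
    facMomCoeff n k (n - 2)
      = 1 / 6 * (n.choose 3 : ℝ) * ((k : ℝ) * (k + 1) / 2) ^ (n - 2) * ((k : ℝ) - 1)
          * ((2 * (n : ℝ) - 3) * k - 2 * n) :=
  facMomCoeff_third_general k n (by lia)
end

section
/- For all integers k ≥ 4 and n ≥ 4, the coefficient of λ^{n−3} in the n-th factorial moment of the Poisson distribution of order k is c_{n−3}(n,k) = (2/135) · C(n,4) · (k(k+1)/2)^{n−3} · (k−1) · [ (10n²−45n+47)k² − 5(4n²−9n−1)k + 2(5n²+1) ]. -/
open scoped BigOperators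

/-! The conditions `∑ j n_j = n` and `∑ n_j = r` together say `∑ (j - 1) n_j = n - r`, so the
multinomial theorem turns `c_r(n, k)` into `n! / r!` times the coefficient of `X ^ (n - r)` in
`(κ₁ + κ₂ X + ⋯ + κ_k X ^ (k - 1)) ^ r`. For `r = n - 3` only `κ₁, …, κ₄` enter this coefficient,
and each of them is `κ₁ = k (k + 1) / 2` times a polynomial in `k`, which is why `κ₁ ^ (n - 3)`
factors out. -/

open Finset Polynomial

lemma cast_choose_eq_prod_range_div {K : Type*} [Field K] [CharZero K] (n r : ℕ) :
    (n.choose r : K) = (∏ i ∈ range r, ((n : K) - i)) / r.factorial := by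
  rw [← descPochhammer_eval_eq_prod_range, descPochhammer_eval_eq_descFactorial,
    Nat.descFactorial_eq_factorial_mul_choose, Nat.cast_mul,
    mul_div_cancel_left₀ _ (Nat.cast_ne_zero.2 r.factorial_ne_zero)]

section PowerCoefficients

variable {R : Type*} [CommSemiring R]

lemma coeff_zero_pow (p : R[X]) (r : ℕ) : (p ^ r).coeff 0 = p.coeff 0 ^ r := by
  simp only [coeff_zero_eq_eval_zero, eval_pow]

lemma coeff_sum_monomial_pow {ι : Type*} [Fintype ι] [DecidableEq ι] (e : ι → ℕ) (a : ι → R)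
    (r d : ℕ) :
    ((∑ i, monomial (e i) (a i)) ^ r).coeff d =
      ∑ f ∈ piAntidiag univ r with ∑ i, e i * f i = d,
        (Nat.multinomial univ f : R) * ∏ i, a i ^ f i := by
  have prod_monomial_pow (f : ι → ℕ) :
      ∏ i, monomial (e i) (a i) ^ f i = monomial (∑ i, e i * f i) (∏ i, a i ^ f i) := by
    simp only [← C_mul_X_pow_eq_monomial, mul_pow, ← pow_mul, prod_mul_distrib,
      prod_pow_eq_pow_sum, map_prod, C_pow]
  simp only [sum_pow_eq_sum_piAntidiag, finsetSum_coeff, sum_filter, prod_monomial_pow,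
    coeff_natCast_mul, coeff_monomial, mul_ite, mul_zero]

-- Factoring `c` out of every coefficient keeps truncated exponents such as `r - 2` out of the
-- formulas for the coefficients of `p ^ r`.
variable {p : R[X]} {c a₁ a₂ a₃ : R}

lemma coeff_one_pow_of_coeff_eq (h₀ : p.coeff 0 = c) (h₁ : p.coeff 1 = c * a₁) (r : ℕ) :
    (p ^ r).coeff 1 = c ^ r * (r * a₁) := by
  induction r with
  | zero => simp [coeff_one]
  | succ r ih =>
    rw [pow_succ, mul_coeff_one, ih, coeff_zero_pow, h₀, h₁]
    push_cast
    ring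

lemma coeff_two_pow_of_coeff_eq (h₀ : p.coeff 0 = c) (h₁ : p.coeff 1 = c * a₁)
    (h₂ : p.coeff 2 = c * a₂) (r : ℕ) :
    (p ^ r).coeff 2 = c ^ r * (r * a₂ + r.choose 2 * a₁ ^ 2) := by
  induction r with
  | zero => simp [coeff_one]
  | succ r ih =>
    have convolution : (p ^ r * p).coeff 2 =
        (p ^ r).coeff 0 * p.coeff 2 + (p ^ r).coeff 1 * p.coeff 1 +
          (p ^ r).coeff 2 * p.coeff 0 := by
      simp [coeff_mul, Nat.sum_antidiagonal_succ, add_assoc]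
    rw [pow_succ, convolution, ih, coeff_one_pow_of_coeff_eq h₀ h₁, coeff_zero_pow, h₀, h₁, h₂,
      Nat.choose_succ_succ' r 1, Nat.choose_one_right]
    push_cast
    ring

lemma coeff_three_pow_of_coeff_eq (h₀ : p.coeff 0 = c) (h₁ : p.coeff 1 = c * a₁)
    (h₂ : p.coeff 2 = c * a₂) (h₃ : p.coeff 3 = c * a₃) (r : ℕ) :
    (p ^ r).coeff 3 =
      c ^ r * (r * a₃ + r.choose 2 * (2 * a₁ * a₂) + r.choose 3 * a₁ ^ 3) := by
  induction r with
  | zero => simp [coeff_one]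
  | succ r ih =>
    have convolution : (p ^ r * p).coeff 3 =
        (p ^ r).coeff 0 * p.coeff 3 + (p ^ r).coeff 1 * p.coeff 2 +
          (p ^ r).coeff 2 * p.coeff 1 + (p ^ r).coeff 3 * p.coeff 0 := by
      simp [coeff_mul, Nat.sum_antidiagonal_succ, add_assoc]
    rw [pow_succ, convolution, ih, coeff_two_pow_of_coeff_eq h₀ h₁ h₂,
      coeff_one_pow_of_coeff_eq h₀ h₁, coeff_zero_pow, h₀, h₁, h₂, h₃,
      Nat.choose_succ_succ' r 2, Nat.choose_succ_succ' r 1, Nat.choose_one_right]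
    push_cast
    ring

end PowerCoefficients

section FactorialMoments

lemma mem_coeffTuples_add {k r d : ℕ} {f : Fin k → Fin (r + d + 1)} :
    f ∈ coeffTuples k (r + d) r ↔
      ∑ j, (f j : ℕ) = r ∧ ∑ j : Fin k, (j : ℕ) * (f j : ℕ) = d := by
  have weight_eq : ∑ j : Fin k, ((j : ℕ) + 1) * (f j : ℕ) =
      ∑ j, (f j : ℕ) + ∑ j : Fin k, (j : ℕ) * (f j : ℕ) := by
    simp only [add_one_mul, sum_add_distrib, add_comm]
  simp only [coeffTuples, mem_filter, mem_univ, true_and, weight_eq]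
  omega

lemma sum_coeffTuples_add {M : Type*} [AddCommMonoid M] (k r d : ℕ) (g : (Fin k → ℕ) → M) :
    ∑ f ∈ coeffTuples k (r + d) r, g (fun j => f j) =
      ∑ f ∈ piAntidiag univ r with ∑ j : Fin k, (j : ℕ) * f j = d, g f := by
  refine sum_nbij (fun f j => f j) (fun f hf => ?mapsTo) (fun f _ f' _ h => ?injOn)
    (fun f hf => ?surjOn) fun _ _ => rfl
  case mapsTo => simpa [mem_piAntidiag] using mem_coeffTuples_add.1 hf
  case injOn => exact funext fun j => Fin.ext (congrFun h j)
  case surjOn =>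
    have sums_eq : ∑ j, f j = r ∧ ∑ j : Fin k, (j : ℕ) * f j = d := by
      simpa [mem_piAntidiag] using hf
    have entry_lt (j : Fin k) : f j < r + d + 1 := by
      have := single_le_sum_of_canonicallyOrdered (f := f) (mem_univ j)
      omega
    exact ⟨fun j => ⟨f j, entry_lt j⟩, mem_coeffTuples_add.2 sums_eq, rfl⟩

/-- The polynomial `κ₁ + κ₂ X + ⋯ + κ_k X^(k-1)` with `κ_j = C(k+1, j+1)`: the factorial-moment
generating function of the Poisson distribution of order `k` is `exp (λ X p(X))` for this `p`. -/
noncomputable def kappaPoly (k : ℕ) : ℝ[X] :=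
  ∑ j : Fin k, monomial (j : ℕ) ((k + 1).choose (j + 2) : ℝ)

lemma coeff_kappaPoly (k i : ℕ) : (kappaPoly k).coeff i = (k + 1).choose (i + 2) := by
  simp only [kappaPoly, finsetSum_coeff, coeff_monomial]
  by_cases hi : i < k
  · rw [Fintype.sum_eq_single ⟨i, hi⟩ (by grind), if_pos rfl]
  · rw [Nat.choose_eq_zero_of_lt (by omega), Nat.cast_zero]
    exact sum_eq_zero fun j _ => if_neg (by omega)

theorem facMomCoeff_add_eq_ascFactorial_mul_coeff (k r d : ℕ) :
    facMomCoeff (r + d) k r = (r + 1).ascFactorial d * (kappaPoly k ^ r).coeff d := by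
  have multinomial_eq {f : Fin k → ℕ} (hf : ∑ j, f j = r) :
      (Nat.multinomial univ f : ℝ) = r.factorial / ∏ j, ((f j).factorial : ℝ) := by
    rw [eq_div_iff (by positivity), mul_comm]
    exact_mod_cast hf ▸ Nat.multinomial_spec univ f
  rw [facMomCoeff, kappaPoly, coeff_sum_monomial_pow, ← Nat.factorial_mul_ascFactorial,
    sum_coeffTuples_add k r d
      fun f => ∏ j : Fin k, ((k + 1).choose (j + 2) : ℝ) ^ f j / (f j).factorial,
    mul_sum, mul_sum]
  refine sum_congr rfl fun f hf => ?_
  rw [multinomial_eq (mem_piAntidiag.1 (mem_filter.1 hf).1).1, prod_div_distrib, Nat.cast_mul]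
  ring

lemma coeff_three_kappaPoly_pow (k r : ℕ) :
    (kappaPoly k ^ r).coeff 3 = ((k : ℝ) * (k + 1) / 2) ^ r *
      (r * (((k : ℝ) - 1) * (k - 2) * (k - 3) / 60) +
        r.choose 2 * (2 * (((k : ℝ) - 1) / 3) * (((k : ℝ) - 1) * (k - 2) / 12)) +
        r.choose 3 * (((k : ℝ) - 1) / 3) ^ 3) := by
  apply coeff_three_pow_of_coeff_eq <;>
    simp only [coeff_kappaPoly, cast_choose_eq_prod_range_div, prod_range_succ, prod_range_zero,
      Nat.factorial] <;>
    push_cast <;>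
    ring

end FactorialMoments

theorem facMomCoeff_fourth_general (k n : ℕ) (hn : 3 ≤ n) :
    facMomCoeff n k (n - 3)
      = 2 / 135 * (n.choose 4 : ℝ) * ((k : ℝ) * (k + 1) / 2) ^ (n - 3) * ((k : ℝ) - 1)
          * ((10 * (n : ℝ) ^ 2 - 45 * n + 47) * (k : ℝ) ^ 2
              - 5 * (4 * (n : ℝ) ^ 2 - 9 * n - 1) * k
              + 2 * (5 * (n : ℝ) ^ 2 + 1)) := by
  obtain ⟨r, rfl⟩ := Nat.exists_eq_add_of_le' hn
  rw [Nat.add_sub_cancel, facMomCoeff_add_eq_ascFactorial_mul_coeff, coeff_three_kappaPoly_pow]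
  simp only [cast_choose_eq_prod_range_div, prod_range_succ, prod_range_zero, Nat.ascFactorial_succ,
    Nat.ascFactorial_zero, Nat.factorial]
  push_cast
  ring

/-- For `k ≥ 4` and `n ≥ 4`, the coefficient of `λ^{n−3}` in the `n`-th factorial
moment of the Poisson distribution of order `k` is
`(2/135) C(n,4) (k(k+1)/2)^{n−3} (k−1) [(10n²−45n+47)k² − 5(4n²−9n−1)k + 2(5n²+1)]`. -/
theorem facMomCoeff_fourth (k n : ℕ) (hk : 4 ≤ k) (hn : 4 ≤ n) :
    facMomCoeff n k (n - 3)
      = 2 / 135 * (n.choose 4 : ℝ) * ((k : ℝ) * (k + 1) / 2) ^ (n - 3) * ((k : ℝ) - 1)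
          * ((10 * (n : ℝ) ^ 2 - 45 * n + 47) * (k : ℝ) ^ 2
              - 5 * (4 * (n : ℝ) ^ 2 - 9 * n - 1) * k
              + 2 * (5 * (n : ℝ) ^ 2 + 1)) := by
  exact facMomCoeff_fourth_general k n (by omega)
end

section
/- For all integers k ≥ 1 and n ≥ 1, the coefficient of the lowest power λ¹ in the n-th factorial moment of the Poisson distribution of order k is c_1(n,k) = n! · C(k+1, n+1) = (k+1)k(k−1)⋯(k−n+1)/(n+1); in particular this coefficient is zero when k < n. -/
open scoped BigOperators

/-!
A tuple `(n₁, …, n_k)` of total `1` is a unit vector `e_j`, and its weight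
`n₁ + 2 n₂ + ⋯ + k n_k` is then `j`. So the sum defining `c_1(n, k)` has the single term
`κ_n = C(k+1, n+1)` if `1 ≤ n ≤ k`, and is empty if `k < n`.
-/

section UnitVector

variable {ι : Type*} [DecidableEq ι]

theorem val_single {n : ℕ} [NeZero n] (j : ι) (a : Fin n) :
    (fun i => ((Pi.single j a : ι → Fin n) i).1) = Pi.single j a.1 :=
  funext fun i => Pi.apply_single (fun _ => Fin.val) (fun _ => Fin.val_zero n) j a i

variable [Fintype ι]

theorem sum_nat_eq_one_iff_exists_eq_single {f : ι → ℕ} :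
    ∑ i, f i = 1 ↔ ∃ j, f = Pi.single j 1 := by
  have h := Finsupp.sum_eq_one_iff (Finsupp.equivFunOnFinite.symm f)
  rw [Finsupp.sum_fintype _ _ fun _ => rfl] at h
  simpa only [Finsupp.equivFunOnFinite_symm_apply_apply, Equiv.symm_apply_eq,
    Finsupp.equivFunOnFinite_single] using h

theorem prod_pow_single_one_div_factorial {K : Type*} [Semifield K] (a : ι → K) (j : ι) :
    ∏ i, a i ^ (Pi.single j 1 : ι → ℕ) i / ((Pi.single j 1 : ι → ℕ) i).factorial = a j := by
  rw [Fintype.prod_eq_single j fun i hi => by simp [hi]]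
  simp

end UnitVector

theorem prod_range_natCast_sub_eq_factorial_mul_choose {R : Type*} [CommRing R] (m n : ℕ) :
    ∏ i ∈ Finset.range n, ((m : R) - i) = n.factorial * m.choose n := by
  rw [← descPochhammer_eval_eq_prod_range, descPochhammer_eval_eq_descFactorial,
    Nat.descFactorial_eq_factorial_mul_choose, Nat.cast_mul]

theorem mem_coeffTuples_one_iff {k n : ℕ} {f : Fin k → Fin (n + 1)} :
    f ∈ coeffTuples k n 1 ↔ ∃ j : Fin k, j.1 + 1 = n ∧ (fun i => (f i).1) = Pi.single j 1 := by
  have weight_single (j : Fin k) (hj : (fun i => (f i).1) = Pi.single j 1) :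
      ∑ i : Fin k, (i.1 + 1) * (f i).1 = j.1 + 1 := by
    simp [congrFun hj, Pi.single_apply]
  rw [coeffTuples, Finset.mem_filter_univ, sum_nat_eq_one_iff_exists_eq_single]
  constructor
  · rintro ⟨hweight, j, hj⟩
    exact ⟨j, (weight_single j hj).symm.trans hweight, hj⟩
  · rintro ⟨j, hjn, hj⟩
    exact ⟨(weight_single j hj).trans hjn, j, hj⟩

theorem coeffTuples_one_eq_empty {k n : ℕ} (hkn : k < n) : coeffTuples k n 1 = ∅ := by
  refine Finset.eq_empty_of_forall_notMem fun f hf => ?_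
  obtain ⟨j, hjn, -⟩ := mem_coeffTuples_one_iff.mp hf
  omega

theorem coeffTuples_one_eq_singleton {k : ℕ} (j : Fin k) :
    coeffTuples k (j.1 + 1) 1 = {Pi.single j 1} := by
  ext f
  rw [mem_coeffTuples_one_iff, Finset.mem_singleton]
  constructor
  · rintro ⟨i, hij, hf⟩
    obtain rfl : i = j := Fin.ext (Nat.succ_injective hij)
    exact Fin.val_injective.comp_left (hf.trans (val_single i (1 : Fin (i.1 + 2))).symm)
  · rintro rfl
    exact ⟨j, rfl, val_single j 1⟩

theorem facMomCoeff_one_eq_zero {k n : ℕ} (hkn : k < n) : facMomCoeff n k 1 = 0 := by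
  rw [facMomCoeff, coeffTuples_one_eq_empty hkn, Finset.sum_empty, mul_zero]

theorem facMomCoeff_val_succ_one {k : ℕ} (j : Fin k) :
    facMomCoeff (j.1 + 1) k 1 = (j.1 + 1).factorial * (k + 1).choose (j.1 + 2) := by
  rw [facMomCoeff, coeffTuples_one_eq_singleton, Finset.sum_singleton]
  simp only [congrFun (val_single j _), Fin.val_one, prod_pow_single_one_div_factorial]

theorem facMomCoeff_one {k n : ℕ} (hn : 1 ≤ n) :
    facMomCoeff n k 1 = n.factorial * (k + 1).choose (n + 1) := by
  obtain hkn | hnk := lt_or_ge k n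
  · rw [facMomCoeff_one_eq_zero hkn, Nat.choose_eq_zero_of_lt (Nat.succ_lt_succ hkn),
      Nat.cast_zero, mul_zero]
  · obtain ⟨m, rfl⟩ := Nat.exists_eq_add_of_le' hn
    exact facMomCoeff_val_succ_one ⟨m, hnk⟩

/-- For `k ≥ 1` and `n ≥ 1`, the coefficient of the lowest power `λ¹` in the `n`-th
factorial moment of the Poisson distribution of order `k` is
`c_1(n,k) = n! C(k+1, n+1) = (k+1)k(k−1)⋯(k−n+1)/(n+1)`;
in particular it vanishes when `k < n`. -/
theorem facMomCoeff_lowest (k n : ℕ) (hk : 1 ≤ k) (hn : 1 ≤ n) :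
    facMomCoeff n k 1 = (n.factorial : ℝ) * ((k + 1).choose (n + 1) : ℝ) ∧
    facMomCoeff n k 1 = (∏ i ∈ Finset.range (n + 1), ((k : ℝ) + 1 - i)) / ((n : ℝ) + 1) ∧
    (k < n → facMomCoeff n k 1 = 0) := by
  refine ⟨facMomCoeff_one hn, ?_, facMomCoeff_one_eq_zero⟩
  have falling : ∏ i ∈ Finset.range (n + 1), ((k : ℝ) + 1 - i) =
      (n + 1).factorial * (k + 1).choose (n + 1) := by
    exact_mod_cast prod_range_natCast_sub_eq_factorial_mul_choose (R := ℝ) (k + 1) (n + 1)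
  rw [facMomCoeff_one hn, falling, eq_div_iff (Nat.cast_add_one_ne_zero n), Nat.factorial_succ]
  push_cast
  ring
end

section
/- For all integers k ≥ 1 and n ≥ 1, the polynomial M_{(n)}(k,λ) contains all powers of λ from λ^n down to λ^{⌈n/k⌉}: the coefficient c_r(n,k) is strictly positive for every integer r with ⌈n/k⌉ ≤ r ≤ n. -/
open scoped BigOperators

lemma exists_lt_add_succ_eq {k r n : ℕ} (hrn : r + 1 ≤ n) (hnk : n ≤ k * (r + 1)) :
    ∃ j < k, ∃ m, m + (j + 1) = n ∧ r ≤ m ∧ m ≤ k * r := by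
  have hk : 0 < k := Nat.pos_of_mul_pos_right (r.succ_pos.trans_le (hrn.trans hnk))
  have hrk : r ≤ k * r := Nat.le_mul_of_pos_left r hk
  rw [mul_add_one] at hnk
  -- Greedy choice: the largest part that still leaves at least `1` for each of the other `r` parts.
  exact ⟨min k (n - r) - 1, by omega, n - min k (n - r), by omega, by omega, by omega⟩

lemma exists_sum_succ_mul_eq_and_sum_eq {k r n : ℕ} (hrn : r ≤ n) (hnk : n ≤ k * r) :
    ∃ f : Fin k → ℕ, ∑ j, (j.1 + 1) * f j = n ∧ ∑ j, f j = r := by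
  induction r generalizing n with
  | zero => exact ⟨0, by simp_all⟩
  | succ r ih =>
    obtain ⟨j, hjk, m, rfl, hrm, hmk⟩ := exists_lt_add_succ_eq hrn hnk
    obtain ⟨f, hweight, hcount⟩ := ih hrm hmk
    refine ⟨f + Pi.single ⟨j, hjk⟩ 1, ?_, ?_⟩
    · simp [mul_add, Finset.sum_add_distrib, hweight, Pi.single_apply]
    · simp [Finset.sum_add_distrib, hcount]

lemma coeffTuples_nonempty_of_sum_eq {k n r : ℕ} (f : Fin k → ℕ)
    (hweight : ∑ j, (j.1 + 1) * f j = n) (hcount : ∑ j, f j = r) :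
    (coeffTuples k n r).Nonempty := by
  have hf_le (j : Fin k) : f j ≤ n :=
    calc f j ≤ (j.1 + 1) * f j := Nat.le_mul_of_pos_left _ j.1.succ_pos
      _ ≤ ∑ i, (i.1 + 1) * f i :=
        Finset.single_le_sum (f := fun i : Fin k ↦ (i.1 + 1) * f i)
          (fun _ _ ↦ Nat.zero_le _) (Finset.mem_univ j)
      _ = n := hweight
  exact ⟨fun j ↦ ⟨f j, Nat.lt_succ_of_le (hf_le j)⟩, by simp [coeffTuples, hweight, hcount]⟩

lemma facMomCoeff_pos_of_coeffTuples_nonempty {k n r : ℕ} (h : (coeffTuples k n r).Nonempty) :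
    0 < facMomCoeff n k r := by
  refine mul_pos (mod_cast n.factorial_pos)
    (Finset.sum_pos (fun f _ ↦ Finset.prod_pos fun j _ ↦ ?_) h)
  have hchoose : 0 < (k + 1).choose (j.1 + 2) := Nat.choose_pos (by omega)
  positivity

/-- For `k ≥ 1` and `n ≥ 1`, the polynomial `M_{(n)}(k,λ)` contains all powers of `λ`
from `λ^n` down to `λ^{⌈n/k⌉}`: the coefficient `c_r(n,k)` is strictly positive for
every `r` with `⌈n/k⌉ ≤ r ≤ n`.  (Here `⌈n/k⌉ = ⌊(n+k−1)/k⌋`.) -/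
theorem facMomCoeff_pos (k n r : ℕ) (hk : 1 ≤ k) (hn : 1 ≤ n)
    (h₁ : (n + k - 1) / k ≤ r) (h₂ : r ≤ n) :
    0 < facMomCoeff n k r := by
  rw [← Nat.ceilDiv_eq_add_pred_div] at h₁
  have hnk : n ≤ k * r := (ceilDiv_le_iff_le_mul hk).1 h₁
  obtain ⟨f, hweight, hcount⟩ := exists_sum_succ_mul_eq_and_sum_eq h₂ hnk
  exact facMomCoeff_pos_of_coeffTuples_nonempty (coeffTuples_nonempty_of_sum_eq f hweight hcount)
end
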